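/- arXiv:2504.14710 — 12 statements merged into one kernel-verified Lean document; each statement's English description precedes it below -/
import Mathlib

section
/- Let α ∈ ℝ and let T : A → F be differentiable on A with (fderiv ℝ T v) v = α • T v for every v ∈ A. Then T is positively α-homogeneous, i.e. T(λ • v) = λ^α • T(v) for all v ∈ A and λ > 0. (Converse direction of Euler's theorem, equation (2.3) of the paper.) -/
/-!
Along the ray through `v`, parametrised as `s ↦ exp s • v`, the radial derivative of `T` is exactly
the quantity in Euler's relation, so `u s = T (exp s • v)` solves the linear equation `u' = α • u`
on all of `ℝ`. Hence `exp (-α s) • u s` has zero derivative and is constant; comparing its values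
at `s = log lam` and `s = 0` gives homogeneity.
-/

/-- **Euler's theorem, converse direction** (equation (2.3) of the paper): if `T` is
differentiable on the conic open set `A ⊆ E \ {0}` and satisfies `(fderiv ℝ T v) v = α • T v`
on `A`, then `T` is positively `α`-homogeneous. -/
theorem stmt_1
    {E F : Type*} [NormedAddCommGroup E] [NormedSpace ℝ E]
    [NormedAddCommGroup F] [NormedSpace ℝ F]
    (A : Set E) (hA_open : IsOpen A) (hA_ne : A.Nonempty)
    (hA_nz : ∀ v ∈ A, v ≠ 0)
    (hA_conic : ∀ v ∈ A, ∀ lam : ℝ, 0 < lam → lam • v ∈ A)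
    (α : ℝ) (T : E → F)
    (hT_diff : ∀ v ∈ A, DifferentiableAt ℝ T v)
    (hT_euler : ∀ v ∈ A, fderiv ℝ T v v = α • T v) :
    ∀ v ∈ A, ∀ lam : ℝ, 0 < lam → T (lam • v) = lam ^ α • T v := by
  intro v hv lam hlam
  have hmem : ∀ s : ℝ, Real.exp s • v ∈ A := fun s => hA_conic v hv _ (Real.exp_pos s)
  have hu : ∀ s : ℝ, HasDerivAt (fun s : ℝ => T (Real.exp s • v)) (α • T (Real.exp s • v)) s := by
    intro s
    have h := (hT_diff _ (hmem s)).hasFDerivAt.comp_hasDerivAt s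
      ((Real.hasDerivAt_exp s).smul_const v)
    rwa [hT_euler _ (hmem s)] at h
  have hg : ∀ s : ℝ,
      HasDerivAt (fun s : ℝ => Real.exp (-α * s) • T (Real.exp s • v)) 0 s := by
    intro s
    have he : HasDerivAt (fun s : ℝ => Real.exp (-α * s)) (Real.exp (-α * s) * (-α)) s := by
      simpa using ((hasDerivAt_id s).const_mul (-α)).exp
    have h := he.smul (hu s)
    rwa [smul_smul, ← add_smul, mul_neg, add_neg_cancel, zero_smul] at h
  have hc := is_const_of_deriv_eq_zero (fun s => (hg s).differentiableAt)
    (fun s => (hg s).deriv) (Real.log lam) 0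
  simp only [Real.exp_log hlam, mul_zero, Real.exp_zero, one_smul] at hc
  rw [← hc, smul_smul, Real.rpow_def_of_pos hlam, ← Real.exp_add]
  have h0 : Real.log lam * α + -α * Real.log lam = 0 := by ring
  rw [h0, Real.exp_zero, one_smul]
end

section
/- Let α ∈ ℝ with α ≠ 0, let s ∈ ℕ, and let S be a differentiable, positively (α−1)-homogeneous F-valued anisotropic (s+1)-covariant tensor on A. Then the tensor R := S − (1/α)·∂̇(ι_C S) satisfies ι_C R = 0; explicitly, for all v ∈ A and all w₁,…,w_s ∈ E, S(v)(w₁,…,w_s,v) = (1/α)·(fderiv ℝ (ι_C S) v v)(w₁,…,w_s). (The projection onto Ker(ι_C) of Proposition 2.1, equations (2.5) and (2.7).) -/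
/-!
Put `T := ι_C S`. Evaluating the last argument of `S v` at `v` raises the degree of homogeneity by
one, so `T` is positively homogeneous of degree `(α - 1) + 1 = α` (`iotaC_smul`), and it
is differentiable, being a continuous bilinear expression in `S v` and `v` (`differentiableAt_iotaC`). Euler's identity
for homogeneous maps (`fderiv_apply_self_of_homogeneous`) gives `(fderiv ℝ T v) v = α • T v`, and
dividing by `α` yields the claim.
-/

/-- The Liouville contraction `ι_C S` of an anisotropic `(s+1)`-covariant tensor `S`:
evaluation of the last argument at the base point, `(ι_C S)(v)(w₁,…,w_s) = S(v)(w₁,…,w_s,v)`. -/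
noncomputable def iotaC {E F : Type*} [NormedAddCommGroup E] [NormedSpace ℝ E]
    [NormedAddCommGroup F] [NormedSpace ℝ F] {s : ℕ}
    (S : E → ContinuousMultilinearMap ℝ (fun _ : Fin (s + 1) => E) F) :
    E → ContinuousMultilinearMap ℝ (fun _ : Fin s => E) F :=
  fun v => (ContinuousLinearMap.apply ℝ F v).compContinuousMultilinearMap
    (continuousMultilinearCurryRightEquiv' ℝ s E F (S v))

theorem iotaC_apply {E F : Type*} [NormedAddCommGroup E] [NormedSpace ℝ E]
    [NormedAddCommGroup F] [NormedSpace ℝ F] {s : ℕ}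
    (S : E → ContinuousMultilinearMap ℝ (fun _ : Fin (s + 1) => E) F) (v : E) (w : Fin s → E) :
    iotaC S v w = S v (Fin.snoc w v) := rfl

theorem iotaC_smul {E F : Type*} [NormedAddCommGroup E] [NormedSpace ℝ E]
    [NormedAddCommGroup F] [NormedSpace ℝ F] {s : ℕ}
    {S : E → ContinuousMultilinearMap ℝ (fun _ : Fin (s + 1) => E) F} {α : ℝ} {v : E} {r : ℝ}
    (hr : 0 < r) (h : S (r • v) = r ^ (α - 1) • S v) :
    iotaC S (r • v) = r ^ α • iotaC S v := by
  ext w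
  have hlast : S v (Fin.snoc w (r • v)) = r • S v (Fin.snoc w v) := by
    have := (S v).map_update_smul (Fin.snoc w v) (Fin.last s) r v
    rwa [Fin.update_snoc_last, Fin.update_snoc_last] at this
  rw [_root_.smul_apply, iotaC_apply, iotaC_apply, h,
    _root_.smul_apply, hlast, smul_smul, Real.rpow_sub_one hr.ne',
    div_mul_cancel₀ _ hr.ne']

/-- Stated for abstract normed spaces so that the calculus lemmas apply without comparing the
topological and the normed structures on spaces of continuous multilinear maps. -/
theorem differentiableAt_bilinear_self {E G G' H : Type*}
    [NormedAddCommGroup E] [NormedSpace ℝ E] [NormedAddCommGroup G] [NormedSpace ℝ G]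
    [NormedAddCommGroup G'] [NormedSpace ℝ G'] [NormedAddCommGroup H] [NormedSpace ℝ H]
    (L : G →L[ℝ] G') (B : E →L[ℝ] G' →L[ℝ] H) {S : E → G} {v : E}
    (h : DifferentiableAt ℝ S v) : DifferentiableAt ℝ (fun x => B x (L (S x))) v :=
  B.differentiableAt.clm_apply (L.differentiableAt.comp v h)

theorem differentiableAt_iotaC {E F : Type*} [NormedAddCommGroup E] [NormedSpace ℝ E]
    [NormedAddCommGroup F] [NormedSpace ℝ F] {s : ℕ}
    {S : E → ContinuousMultilinearMap ℝ (fun _ : Fin (s + 1) => E) F} {v : E}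
    (h : DifferentiableAt ℝ S v) : DifferentiableAt ℝ (iotaC S) v := by
  let curry : ContinuousMultilinearMap ℝ (fun _ : Fin (s + 1) => E) F →L[ℝ]
      ContinuousMultilinearMap ℝ (fun _ : Fin s => E) (E →L[ℝ] F) :=
    (continuousMultilinearCurryRightEquiv' ℝ s E F).toContinuousLinearEquiv.toContinuousLinearMap
  let postEval : E →L[ℝ] ContinuousMultilinearMap ℝ (fun _ : Fin s => E) (E →L[ℝ] F) →L[ℝ]
      ContinuousMultilinearMap ℝ (fun _ : Fin s => E) F :=
    (ContinuousLinearMap.compContinuousMultilinearMapL ℝ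
      (fun _ : Fin s => E) (E →L[ℝ] F) F).comp (ContinuousLinearMap.apply ℝ F)
  exact differentiableAt_bilinear_self
    (G := ContinuousMultilinearMap ℝ (fun _ : Fin (s + 1) => E) F)
    (G' := ContinuousMultilinearMap ℝ (fun _ : Fin s => E) (E →L[ℝ] F))
    (H := ContinuousMultilinearMap ℝ (fun _ : Fin s => E) F) curry postEval h

/-- **Euler's identity**: a map that is positively `α`-homogeneous along the ray through `v` and
differentiable at `v` has radial derivative `α • T v` at `v`. -/
theorem fderiv_apply_self_of_homogeneous {E G : Type*} [NormedAddCommGroup E] [NormedSpace ℝ E]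
    [NormedAddCommGroup G] [NormedSpace ℝ G] {T : E → G} {α : ℝ} {v : E}
    (hT : DifferentiableAt ℝ T v) (h : ∀ r : ℝ, 0 < r → T (r • v) = r ^ α • T v) :
    fderiv ℝ T v v = α • T v := by
  have hray : HasDerivAt (fun r : ℝ => r • v) v 1 := by
    simpa using (hasDerivAt_id (1 : ℝ)).smul_const v
  have hchain : HasDerivAt (fun r : ℝ => T (r • v)) (fderiv ℝ T v v) 1 :=
    HasFDerivAt.comp_hasDerivAt (1 : ℝ) (by simpa using hT.hasFDerivAt) hray
  have hpow : HasDerivAt (fun r : ℝ => r ^ α • T v) (α • T v) 1 := by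
    simpa using (Real.hasDerivAt_rpow_const (x := 1) (p := α) (Or.inl one_ne_zero)).smul_const (T v)
  refine hchain.unique (hpow.congr_of_eventuallyEq ?_)
  filter_upwards [lt_mem_nhds (zero_lt_one' ℝ)] with r hr using h r hr

/-- **Projection onto `Ker(ι_C)`** (Proposition 2.1, equations (2.5) and (2.7)): for `α ≠ 0`
and a differentiable, positively `(α−1)`-homogeneous `(s+1)`-covariant tensor `S` on the conic
open set `A ⊆ E \ {0}`, the tensor `R := S − (1/α)·∂̇(ι_C S)` satisfies `ι_C R = 0`;
explicitly `S(v)(w₁,…,w_s,v) = (1/α)·(fderiv ℝ (ι_C S) v v)(w₁,…,w_s)`. -/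
theorem stmt_3
    {E F : Type*} [NormedAddCommGroup E] [NormedSpace ℝ E]
    [NormedAddCommGroup F] [NormedSpace ℝ F]
    (A : Set E) (hA_open : IsOpen A) (hA_ne : A.Nonempty)
    (hA_nz : ∀ v ∈ A, v ≠ 0)
    (hA_conic : ∀ v ∈ A, ∀ lam : ℝ, 0 < lam → lam • v ∈ A)
    (α : ℝ) (hα : α ≠ 0) (s : ℕ)
    (S : E → ContinuousMultilinearMap ℝ (fun _ : Fin (s + 1) => E) F)
    (hS_diff : ∀ v ∈ A, DifferentiableAt ℝ S v)
    (hS_hom : ∀ v ∈ A, ∀ lam : ℝ, 0 < lam → S (lam • v) = lam ^ (α - 1) • S v) :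
    ∀ v ∈ A, ∀ w : Fin s → E,
      S v (Fin.snoc w v) = (1 / α) • (fderiv ℝ (iotaC S) v v) w := by
  intro v hv w
  have hEuler := fderiv_apply_self_of_homogeneous (differentiableAt_iotaC (hS_diff v hv))
    fun r hr => iotaC_smul hr (hS_hom v hv r hr)
  rw [hEuler, _root_.smul_apply, iotaC_apply, smul_smul, one_div,
    inv_mul_cancel₀ hα, one_smul]
end

section
/- Let α ∈ ℝ, let k ∈ ℕ, and let T : A → F be k-times continuously differentiable on A and positively α-homogeneous. Then for every v ∈ A, the k-th iterated Fréchet derivative of T at v, evaluated on the k-tuple (v, v, …, v), equals α(α−1)(α−2)⋯(α−k+1) • T v. (The 'going up then back down the ladder' identity ι_C^k ∘ ∂̇^k = α(α−1)⋯(α−k+1)·Id of Theorem 2.4 and Remark 2.6.) -/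
/-! Along the ray `s ↦ s • v`, `s > 0`, the curve `s ↦ DʲT(s • v)(v, …, v)` has derivative
`Dʲ⁺¹T(s • v)(v, …, v)` by the chain rule. Homogeneity identifies the case `j = 0` with
`s ^ α • T v`, so by induction the `j`-th curve is the `j`-th derivative of `s ^ α • T v`, namely
`α(α−1)⋯(α−j+1) s ^ (α−j) • T v`. Setting `s = 1` gives the identity. -/


/-- **Iterated Euler identity** (`ι_C^k ∘ ∂̇^k = α(α−1)⋯(α−k+1)·Id`, Theorem 2.4 and
Remark 2.6): if `T` is `C^k` on the conic open set `A ⊆ E \ {0}` and positively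
`α`-homogeneous, then the `k`-th iterated Fréchet derivative of `T` at `v`, evaluated on
`(v, …, v)`, equals `α(α−1)⋯(α−k+1) • T v`. -/
theorem stmt_5
    {E F : Type*} [NormedAddCommGroup E] [NormedSpace ℝ E]
    [NormedAddCommGroup F] [NormedSpace ℝ F]
    (A : Set E) (hA_open : IsOpen A) (hA_ne : A.Nonempty)
    (hA_nz : ∀ v ∈ A, v ≠ 0)
    (hA_conic : ∀ v ∈ A, ∀ lam : ℝ, 0 < lam → lam • v ∈ A)
    (α : ℝ) (k : ℕ) (T : E → F)
    (hT_diff : ContDiffOn ℝ k T A)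
    (hT_hom : ∀ v ∈ A, ∀ lam : ℝ, 0 < lam → T (lam • v) = lam ^ α • T v) :
    ∀ v ∈ A, iteratedFDeriv ℝ k T v (fun _ => v) =
      (∏ i ∈ Finset.range k, (α - (i : ℝ))) • T v := by
  intro v hv
  have key : ∀ j : ℕ, j ≤ k → ∀ s : ℝ, 0 < s →
      iteratedFDeriv ℝ j T (s • v) (fun _ => v) =
        ((∏ i ∈ Finset.range j, (α - (i : ℝ))) * s ^ (α - (j : ℝ))) • T v := by
    intro j
    induction j with
    | zero =>
      intro _ s hs
      simp [hT_hom v hv s hs]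
    | succ j ih =>
      intro hj s hs
      have hC : ContDiffAt ℝ k T (s • v) :=
        hT_diff.contDiffAt (hA_open.mem_nhds (hA_conic v hv s hs))
      have hD : DifferentiableAt ℝ (iteratedFDeriv ℝ j T) (s • v) :=
        hC.differentiableAt_iteratedFDeriv (by exact_mod_cast hj)
      have hray : HasDerivAt (fun t : ℝ => t • v) v s := by
        simpa using (hasDerivAt_id s).smul_const v
      have h1 : HasDerivAt (fun t : ℝ => iteratedFDeriv ℝ j T (t • v) (fun _ => v))
          (iteratedFDeriv ℝ (j + 1) T (s • v) (fun _ => v)) s := by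
        have h := hD.hasFDerivAt.comp_hasDerivAt s hray
        exact (ContinuousMultilinearMap.apply ℝ (fun _ : Fin j => E) F
          (fun _ => v)).hasFDerivAt.comp_hasDerivAt s h
      have h2 : HasDerivAt
          (fun t : ℝ => ((∏ i ∈ Finset.range j, (α - (i : ℝ))) * t ^ (α - (j : ℝ))) • T v)
          (((∏ i ∈ Finset.range j, (α - (i : ℝ))) *
            ((α - (j : ℝ)) * s ^ (α - (j : ℝ) - 1))) • T v) s :=
        ((Real.hasDerivAt_rpow_const (Or.inl hs.ne')).const_mul _).smul_const (T v)
      have heq : (fun t : ℝ => iteratedFDeriv ℝ j T (t • v) (fun _ => v)) =ᶠ[nhds s]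
          (fun t : ℝ => ((∏ i ∈ Finset.range j, (α - (i : ℝ))) * t ^ (α - (j : ℝ))) • T v) := by
        filter_upwards [lt_mem_nhds hs] with t ht
        exact ih (by omega) t ht
      rw [h1.unique (h2.congr_of_eventuallyEq heq), Finset.prod_range_succ, mul_assoc]
      congr 4
      push_cast
      ring
  simpa using key k le_rfl 1 one_pos
end

section
/- Let α ≥ 0 and k ≥ 1 be integers, set β := α + k, and let s ≥ k be an integer. Let S be a k-times continuously differentiable, positively α-homogeneous F-valued anisotropic s-covariant tensor on A. Then there exist unique maps T and Δ_{α+1}, …, Δ_β with the following properties: T is a positively β-homogeneous, k-times continuously differentiable F-valued anisotropic (s−k)-covariant tensor on A; for each ν ∈ {α+1,…,β}, Δ_ν is a positively (ν−1)-homogeneous, (ν−α−1)-times continuously differentiable F-valued anisotropic (s−ν+α+1)-covariant tensor on A satisfying ι_C Δ_ν = 0 (evaluation of its last argument at the base point vanishes identically); and S = ∂̇^k T + Σ_{ν=α+1}^{β} ∂̇^{ν−α−1} Δ_ν, where ∂̇^m denotes the m-fold iterated vertical derivative, each new argument placed last. (The ladder decomposition of Theorem 2.4; the Δ_ν are the integrability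 residues of S.) -/
/-!
Euler's identity drives both halves: if `X` is positively `d`-homogeneous then contracting `∂̇X`
with the base point gives `d • X`.

*Existence.* Put `T_0 = S` and `T_{j+1} = (α + j + 1)⁻¹ • ι_C T_j` (`ladder`). Contraction with the
base point raises the degree of homogeneity by one and costs no derivative, so every `T_j` is `C^k`
and `(α + j)`-homogeneous. By Euler, `Δ_j = T_j - ∂̇T_{j+1}` (`residue`) is killed by `ι_C`; it is
only `C^{k-1}`, which suffices because `j ≤ k - 1`. Since `∂̇^j Δ_j = ∂̇^j T_j - ∂̇^{j+1} T_{j+1}`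
(`term_residue`), the sum of the `∂̇^j Δ_j` telescopes to `S - ∂̇^k T_k`.

*Uniqueness.* By linearity it is enough to show that a decomposition of zero is trivial
(`eq_zero_of_sum_term_eq_zero`). Iterating Euler, `∂̇^j X` with its `j` last arguments equal to the
base point is a nonzero multiple of `X` (`term_eq_of_tail_eq`). Put the base point into the last
`k` arguments of the relation: each `Δ_j`-term becomes a multiple of `Δ_j` with its last argument
at the base point, hence vanishes, and `T = 0` remains. The same with the last `j` arguments gives
`Δ_j = 0`, by downward induction on `j`: the higher terms are zero by induction, the lower ones
because they are killed by `ι_C`.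
-/


/-- `LadderDecomp A α k s hk hsk S T Δ` says that the positively `α`-homogeneous
`s`-covariant tensor `S` decomposes on `A` as `S = ∂̇^k T + Σ_{ν=α+1}^{α+k} ∂̇^{ν−α−1} Δ_ν`
(indexing the residue `Δ_ν` by `j := ν−α−1 ∈ Fin k`), where:
`T` is positively `(α+k)`-homogeneous, `k`-times continuously differentiable and
`(s−k)`-covariant; each `Δ_j` is positively `(α+j)`-homogeneous, `j`-times continuously
differentiable, `(s−j)`-covariant, and killed by the Liouville contraction (it vanishes
whenever its last argument equals the base point).  The `m`-fold vertical derivative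
`∂̇^m` (each new argument placed last) is expressed through the `m`-th iterated Fréchet
derivative, fed with the last `m` arguments in reverse order (innermost derivative first). -/
def LadderDecomp {E F : Type*} [NormedAddCommGroup E] [NormedSpace ℝ E]
    [NormedAddCommGroup F] [NormedSpace ℝ F]
    (A : Set E) (α k s : ℕ) (hk : 1 ≤ k) (hsk : k ≤ s)
    (S : E → ContinuousMultilinearMap ℝ (fun _ : Fin s => E) F)
    (T : E → ContinuousMultilinearMap ℝ (fun _ : Fin (s - k) => E) F)
    (Δ : (j : Fin k) → E → ContinuousMultilinearMap ℝ (fun _ : Fin (s - (j : ℕ)) => E) F) :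
    Prop :=
  ContDiffOn ℝ k T A ∧
  (∀ v ∈ A, ∀ lam : ℝ, 0 < lam → T (lam • v) = lam ^ ((α + k : ℕ) : ℝ) • T v) ∧
  (∀ j : Fin k,
    ContDiffOn ℝ (j : ℕ) (Δ j) A ∧
    (∀ v ∈ A, ∀ lam : ℝ, 0 < lam →
      Δ j (lam • v) = lam ^ ((α + (j : ℕ) : ℕ) : ℝ) • Δ j v) ∧
    (∀ v ∈ A, ∀ w : Fin (s - (j : ℕ)) → E,
      w ⟨s - (j : ℕ) - 1, by omega⟩ = v → Δ j v w = 0)) ∧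
  (∀ v ∈ A, ∀ w : Fin s → E,
    S v w =
      (iteratedFDeriv ℝ k T v (fun i : Fin k => w ⟨s - 1 - (i : ℕ), by omega⟩))
        (fun i : Fin (s - k) => w ⟨(i : ℕ), by omega⟩) +
      ∑ j : Fin k,
        (iteratedFDeriv ℝ (j : ℕ) (Δ j) v
            (fun i : Fin (j : ℕ) => w ⟨s - 1 - (i : ℕ), by omega⟩))
          (fun i : Fin (s - (j : ℕ)) => w ⟨(i : ℕ), by omega⟩))

noncomputable section

variable {E F : Type*} [NormedAddCommGroup E] [NormedSpace ℝ E]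
  [NormedAddCommGroup F] [NormedSpace ℝ F]

variable (E F) in
/-- Currying in the last argument, `f ↦ (u ↦ f (·, …, ·, u))`, as a continuous linear equivalence.
The arity is a variable `m` with `m = n + 1`, so that the truncated arities `s - j` and
`s - (j + 1)` can be used without casts. The Liouville contraction of `X` is
`v ↦ curryLast (X v) v`, and its vertical derivative is `v ↦ curryLast.symm (fderiv ℝ X v)`. -/
def curryLast {m n : ℕ} (h : m = n + 1) :
    ContinuousMultilinearMap ℝ (fun _ : Fin m => E) F ≃L[ℝ]
      (E →L[ℝ] ContinuousMultilinearMap ℝ (fun _ : Fin n => E) F) :=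
  (ContinuousMultilinearMap.domDomCongrₗᵢ ℝ E F
      ((finCongr h).trans (finRotate (n + 1)))).toContinuousLinearEquiv.trans
    (continuousMultilinearCurryLeftEquiv ℝ (fun _ : Fin (n + 1) => E) F).toContinuousLinearEquiv

theorem curryLast_apply {m n : ℕ} (h : m = n + 1)
    (f : ContinuousMultilinearMap ℝ (fun _ : Fin m => E) F) (w : Fin m → E) :
    curryLast E F h f (w ⟨n, by omega⟩) (fun i : Fin n => w ⟨(i : ℕ), by omega⟩) = f w := by
  subst h
  simp only [curryLast, ContinuousLinearEquiv.trans_apply]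
  change f _ = f w
  congr 1
  funext i
  refine Fin.lastCases ?_ (fun i => ?_) i
  · simp; rfl
  · simp only [Equiv.trans_apply, finCongr_apply, Fin.cast_eq_self, finRotate_apply,
      Fin.coeSucc_eq_succ, Fin.cons_succ]
    rfl

theorem curryLast_symm_apply {m n : ℕ} (h : m = n + 1)
    (φ : E →L[ℝ] ContinuousMultilinearMap ℝ (fun _ : Fin n => E) F) (w : Fin m → E) :
    (curryLast E F h).symm φ w = φ (w ⟨n, by omega⟩) (fun i : Fin n => w ⟨(i : ℕ), by omega⟩) := by
  rw [← curryLast_apply h, ContinuousLinearEquiv.apply_symm_apply]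

/-- The target spaces are given explicitly: unification does not recover their normed structures
from the topologies in the type of `curryLast`. -/
theorem contDiff_curryLast {m n : ℕ} (h : m = n + 1) {r : WithTop ℕ∞} :
    ContDiff ℝ r (curryLast E F h) :=
  ContinuousLinearEquiv.contDiff (𝕜 := ℝ)
    (E := ContinuousMultilinearMap ℝ (fun _ : Fin m => E) F)
    (F := E →L[ℝ] ContinuousMultilinearMap ℝ (fun _ : Fin n => E) F) (curryLast E F h)

theorem contDiff_curryLast_symm {m n : ℕ} (h : m = n + 1) {r : WithTop ℕ∞} :
    ContDiff ℝ r (curryLast E F h).symm :=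
  ContinuousLinearEquiv.contDiff (𝕜 := ℝ)
    (E := E →L[ℝ] ContinuousMultilinearMap ℝ (fun _ : Fin n => E) F)
    (F := ContinuousMultilinearMap ℝ (fun _ : Fin m => E) F) (curryLast E F h).symm

/-- The iterated Euler identity along the ray through `v`. Keeping `t` free allows the induction
step, which differentiates in `t`; for `j > d` the descending factorial is zero, so the truncated
exponent is harmless. -/
theorem iteratedFDeriv_apply_ray {A : Set E} (hA_open : IsOpen A)
    (hA_conic : ∀ v ∈ A, ∀ lam : ℝ, 0 < lam → lam • v ∈ A) {d : ℕ} {X : E → F}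
    (hX : ∀ v ∈ A, ∀ lam : ℝ, 0 < lam → X (lam • v) = lam ^ (d : ℝ) • X v)
    {v : E} (hv : v ∈ A) (j : ℕ) (hXj : ContDiffOn ℝ j X A) {t : ℝ} (ht : 0 < t) :
    iteratedFDeriv ℝ j X (t • v) (fun _ => v) =
      ((d.descFactorial j : ℝ) * t ^ (d - j)) • X v := by
  induction j generalizing t with
  | zero => simp [hX v hv t ht]
  | succ j ih =>
    have hXj' : ContDiffOn ℝ j X A := hXj.of_le (by exact_mod_cast j.le_succ)
    have hdiff : DifferentiableAt ℝ (iteratedFDeriv ℝ j X) (t • v) :=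
      (hXj.contDiffAt (hA_open.mem_nhds (hA_conic v hv t ht))).differentiableAt_iteratedFDeriv
        (by exact_mod_cast j.lt_succ_self)
    have h1 : HasDerivAt (fun r : ℝ => iteratedFDeriv ℝ j X (r • v) (fun _ => v))
        (fderiv ℝ (iteratedFDeriv ℝ j X) (t • v) v (fun _ => v)) t := by
      have hl : HasDerivAt (fun r : ℝ => r • v) v t := by
        simpa using (hasDerivAt_id t).smul_const v
      have := hdiff.hasFDerivAt.comp_hasDerivAt t hl
      exact (ContinuousMultilinearMap.apply ℝ (fun _ : Fin j => E) F
        (fun _ => v)).hasFDerivAt.comp_hasDerivAt t this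
    have h2 : HasDerivAt (fun r : ℝ => ((d.descFactorial j : ℝ) * r ^ (d - j)) • X v)
        (((d.descFactorial j : ℝ) * (((d - j : ℕ) : ℝ) * t ^ (d - j - 1))) • X v) t :=
      ((hasDerivAt_pow (d - j) t).const_mul _).smul_const _
    have h3 : (fun r : ℝ => iteratedFDeriv ℝ j X (r • v) (fun _ => v)) =ᶠ[nhds t]
        fun r : ℝ => ((d.descFactorial j : ℝ) * r ^ (d - j)) • X v := by
      filter_upwards [lt_mem_nhds ht] with r hr using ih hXj' hr
    rw [iteratedFDeriv_succ_apply_left]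
    refine (h1.unique (h2.congr_of_eventuallyEq h3)).trans ?_
    rw [Nat.descFactorial_succ, Nat.sub_sub]
    push_cast
    ring_nf

theorem iteratedFDeriv_apply_self {A : Set E} (hA_open : IsOpen A)
    (hA_conic : ∀ v ∈ A, ∀ lam : ℝ, 0 < lam → lam • v ∈ A) {d : ℕ} {X : E → F}
    (hX : ∀ v ∈ A, ∀ lam : ℝ, 0 < lam → X (lam • v) = lam ^ (d : ℝ) • X v)
    {v : E} (hv : v ∈ A) (j : ℕ) (hXj : ContDiffOn ℝ j X A) :
    iteratedFDeriv ℝ j X v (fun _ => v) = (d.descFactorial j : ℝ) • X v := by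
  simpa using iteratedFDeriv_apply_ray hA_open hA_conic hX hv j hXj one_pos

theorem fderiv_homogeneous {A : Set E} (hA_open : IsOpen A)
    {d : ℕ} {X : E → F}
    (hX : ∀ v ∈ A, ∀ lam : ℝ, 0 < lam → X (lam • v) = lam ^ ((d + 1 : ℕ) : ℝ) • X v)
    {v : E} (hv : v ∈ A) (hXv : DifferentiableAt ℝ X v) {lam : ℝ} (hl : 0 < lam) :
    fderiv ℝ X (lam • v) = lam ^ (d : ℝ) • fderiv ℝ X v := by
  have h1 : fderiv ℝ (fun x => X (lam • x)) v = lam • fderiv ℝ X (lam • v) :=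
    fderiv_comp_smul lam
  have h2 : (fun x => X (lam • x)) =ᶠ[nhds v] fun x => lam ^ ((d + 1 : ℕ) : ℝ) • X x := by
    filter_upwards [hA_open.mem_nhds hv] with x hx using hX x hx lam hl
  rw [h2.fderiv_eq, fderiv_fun_const_smul hXv] at h1
  apply smul_right_injective _ hl.ne'
  simp only
  rw [← h1, smul_smul, Real.rpow_natCast, Real.rpow_natCast, pow_succ']

/-- The normalised iterated Liouville contractions of `S`: `T_0 = S` and
`T_{j+1} = (α + j + 1)⁻¹ • ι_C T_j`. Beyond `j = s` no argument is left to contract, and the value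
is the dummy `0`. -/
def ladder (α s : ℕ) (S : E → ContinuousMultilinearMap ℝ (fun _ : Fin s => E) F) :
    (j : ℕ) → E → ContinuousMultilinearMap ℝ (fun _ : Fin (s - j) => E) F
  | 0 => S
  | j + 1 => fun v =>
      if h : j < s then
        ((α + j + 1 : ℕ) : ℝ)⁻¹ •
          curryLast E F (m := s - j) (n := s - (j + 1)) (by omega) (ladder α s S j v) v
      else 0

/-- The integrability residue `Δ_j = T_j - ∂̇T_{j+1}`, where `T_j = ladder α s S j`; the dummy value
`0` is used for `j ≥ s`. -/
def residue (α s : ℕ) (S : E → ContinuousMultilinearMap ℝ (fun _ : Fin s => E) F)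
    (j : ℕ) (v : E) : ContinuousMultilinearMap ℝ (fun _ : Fin (s - j) => E) F :=
  if h : j < s then
    ladder α s S j v -
      (curryLast E F (m := s - j) (n := s - (j + 1)) (by omega)).symm (fderiv ℝ (ladder α s S (j + 1)) v)
  else 0

section
variable {A : Set E} {α k s : ℕ} {S : E → ContinuousMultilinearMap ℝ (fun _ : Fin s => E) F}

theorem ladder_succ {j : ℕ} (hj : j < s) :
    ladder α s S (j + 1) = fun v => ((α + j + 1 : ℕ) : ℝ)⁻¹ •
      curryLast E F (m := s - j) (n := s - (j + 1)) (by omega) (ladder α s S j v) v := by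
  funext v
  simp [ladder, hj]

theorem residue_eq {j : ℕ} (hj : j < s) :
    residue α s S j = ladder α s S j -
      (curryLast E F (m := s - j) (n := s - (j + 1)) (by omega)).symm ∘ fderiv ℝ (ladder α s S (j + 1)) := by
  funext v
  simp [residue, hj]

theorem contDiffOn_ladder (hS : ContDiffOn ℝ k S A) {j : ℕ} (hj : j ≤ s) :
    ContDiffOn ℝ k (ladder α s S j) A := by
  induction j with
  | zero => exact hS
  | succ j ih =>
    rw [ladder_succ hj]
    exact ContDiffOn.const_smul ((α + j + 1 : ℕ) : ℝ)⁻¹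
      (ContDiffOn.clm_apply ((contDiff_curryLast (by omega)).comp_contDiffOn (ih (by omega)))
        contDiffOn_id)

theorem ladder_homogeneous
    (hS : ∀ v ∈ A, ∀ lam : ℝ, 0 < lam → S (lam • v) = lam ^ (α : ℝ) • S v)
    {j : ℕ} (hj : j ≤ s) :
    ∀ v ∈ A, ∀ lam : ℝ, 0 < lam →
      ladder α s S j (lam • v) = lam ^ ((α + j : ℕ) : ℝ) • ladder α s S j v := by
  induction j with
  | zero => exact hS
  | succ j ih =>
    intro v hv lam hl
    rw [ladder_succ hj]
    simp only
    rw [ih (by omega) v hv lam hl, map_smul, map_smul, _root_.smul_apply,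
      smul_smul, smul_smul, smul_smul, Real.rpow_natCast, Real.rpow_natCast]
    congr 1
    ring

theorem contDiffOn_fderiv_ladder (hA : IsOpen A) (hS : ContDiffOn ℝ k S A) {j : ℕ} (hj : j < k)
    {i : ℕ} (hi : i ≤ s) : ContDiffOn ℝ j (fderiv ℝ (ladder α s S i)) A :=
  (contDiffOn_ladder hS hi).fderiv_of_isOpen hA (by exact_mod_cast hj)

theorem contDiffOn_residue (hA : IsOpen A) (hS : ContDiffOn ℝ k S A) {j : ℕ} (hjk : j < k)
    (hj : j < s) : ContDiffOn ℝ j (residue α s S j) A := by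
  rw [residue_eq hj]
  exact ((contDiffOn_ladder hS hj.le).of_le (by exact_mod_cast hjk.le)).sub
    ((contDiff_curryLast_symm (by omega)).comp_contDiffOn
      (contDiffOn_fderiv_ladder hA hS hjk hj))

theorem differentiableAt_ladder (hA : IsOpen A) (hk : 1 ≤ k) (hS : ContDiffOn ℝ k S A) {j : ℕ}
    (hj : j ≤ s) {v : E} (hv : v ∈ A) : DifferentiableAt ℝ (ladder α s S j) v :=
  ((contDiffOn_ladder hS hj).contDiffAt (hA.mem_nhds hv)).differentiableAt
    (by exact_mod_cast (by omega : k ≠ 0))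

theorem residue_homogeneous (hA : IsOpen A) (hk : 1 ≤ k) (hSd : ContDiffOn ℝ k S A)
    (hS : ∀ v ∈ A, ∀ lam : ℝ, 0 < lam → S (lam • v) = lam ^ (α : ℝ) • S v)
    {j : ℕ} (hj : j < s) {v : E} (hv : v ∈ A) {lam : ℝ} (hl : 0 < lam) :
    residue α s S j (lam • v) = lam ^ ((α + j : ℕ) : ℝ) • residue α s S j v := by
  rw [residue_eq hj]
  simp only [Pi.sub_apply, Function.comp_apply]
  rw [ladder_homogeneous hS hj.le v hv lam hl,
    fderiv_homogeneous (d := α + j) hA (ladder_homogeneous hS hj) hv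
      (differentiableAt_ladder hA hk hSd hj hv) hl, map_smul, smul_sub]

/-- Euler's identity for `T_{j+1}` says `ι_C ∂̇T_{j+1} = (α + j + 1) • T_{j+1} = ι_C T_j`, so
`ι_C Δ_j = 0`. -/
theorem residue_liouville (hA : IsOpen A)
    (hA_conic : ∀ v ∈ A, ∀ lam : ℝ, 0 < lam → lam • v ∈ A)
    (hk : 1 ≤ k) (hSd : ContDiffOn ℝ k S A)
    (hS : ∀ v ∈ A, ∀ lam : ℝ, 0 < lam → S (lam • v) = lam ^ (α : ℝ) • S v)
    {j : ℕ} (hj : j < s) {v : E} (hv : v ∈ A) (w : Fin (s - j) → E)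
    (hw : w ⟨s - j - 1, by omega⟩ = v) : residue α s S j v w = 0 := by
  have hw' : w ⟨s - (j + 1), by omega⟩ = v := hw
  have euler := iteratedFDeriv_apply_self hA hA_conic
    (ladder_homogeneous (j := j + 1) hS hj) hv 1
    ((contDiffOn_ladder hSd hj).of_le (by exact_mod_cast hk))
  rw [iteratedFDeriv_one_apply, Nat.descFactorial_one, ladder_succ hj] at euler
  have hne : ((α + j + 1 : ℕ) : ℝ) ≠ 0 := by positivity
  simp only at euler
  rw [← add_assoc, smul_inv_smul₀ hne] at euler
  rw [residue_eq hj]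
  simp only [Pi.sub_apply, Function.comp_apply, _root_.sub_apply]
  rw [curryLast_symm_apply, hw', ladder_succ hj, euler, sub_eq_zero]
  rw [← curryLast_apply (n := s - (j + 1)) (by omega), hw']

/-- The value `(∂̇^j X)(v)(w)` for an `(s - j)`-covariant `X`, written as in `LadderDecomp`: the last
`j` entries of `w`, in reverse order, are the directions of differentiation. -/
def ladderTerm (v : E) (w : Fin s → E) (hs : 1 ≤ s) (j : ℕ)
    (X : E → ContinuousMultilinearMap ℝ (fun _ : Fin (s - j) => E) F) : F :=
  (iteratedFDeriv ℝ j X v (fun i : Fin j => w ⟨s - 1 - (i : ℕ), by omega⟩))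
    (fun i : Fin (s - j) => w ⟨(i : ℕ), by omega⟩)

/-- The telescoping relation `∂̇^j Δ_j = ∂̇^j T_j - ∂̇^{j+1} T_{j+1}`. -/
theorem term_residue (hA : IsOpen A) (hSd : ContDiffOn ℝ k S A)
    {j : ℕ} (hjk : j < k) (hj : j < s) {v : E} (hv : v ∈ A) (w : Fin s → E) :
    ladderTerm v w (by omega) j (residue α s S j) =
      ladderTerm v w (by omega) j (ladder α s S j) -
        ladderTerm v w (by omega) (j + 1) (ladder α s S (j + 1)) := by
  have hnh := hA.mem_nhds hv
  have hcomp := ContinuousLinearEquiv.iteratedFDeriv_comp_left (𝕜 := ℝ)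
    (F := E →L[ℝ] ContinuousMultilinearMap ℝ (fun _ : Fin (s - (j + 1)) => E) F)
    (G := ContinuousMultilinearMap ℝ (fun _ : Fin (s - j) => E) F)
    (f := fderiv ℝ (ladder α s S (j + 1))) (x := v) (i := j)
    (curryLast E F (m := s - j) (n := s - (j + 1)) (by omega)).symm
  unfold ladderTerm
  rw [residue_eq hj, iteratedFDeriv_sub_apply
    (((contDiffOn_ladder hSd hj.le).of_le (by exact_mod_cast hjk.le)).contDiffAt hnh)
    (((contDiff_curryLast_symm (by omega)).comp_contDiffOn
      (contDiffOn_fderiv_ladder (i := j + 1) hA hSd hjk hj)).contDiffAt hnh),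
    hcomp, iteratedFDeriv_succ_apply_right]
  simp only [_root_.sub_apply]
  congr 1
  -- The slot split off by `curryLast`, `s - (j + 1)`, is the innermost direction `s - 1 - j`.
  refine (curryLast_symm_apply _ _ _).trans ?_
  simp only [Fin.val_last]
  congr! 4
  omega

/-- The `j`-fold contraction of `∂̇^j X` with the base point is `(α + j)! / α!` times `X`. -/
theorem term_eq_of_tail_eq (hA : IsOpen A)
    (hA_conic : ∀ v ∈ A, ∀ lam : ℝ, 0 < lam → lam • v ∈ A) {j : ℕ}
    {X : E → ContinuousMultilinearMap ℝ (fun _ : Fin (s - j) => E) F}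
    (hXd : ContDiffOn ℝ j X A)
    (hX : ∀ v ∈ A, ∀ lam : ℝ, 0 < lam → X (lam • v) = lam ^ ((α + j : ℕ) : ℝ) • X v)
    (hs : 1 ≤ s) (hj : j ≤ s) {v : E} (hv : v ∈ A) {w : Fin s → E}
    (hw : ∀ i : Fin s, s - j ≤ (i : ℕ) → w i = v) :
    ladderTerm v w hs j X =
      ((α + j).descFactorial j : ℝ) • X v (fun i : Fin (s - j) => w ⟨(i : ℕ), by omega⟩) := by
  unfold ladderTerm
  have : (fun i : Fin j => w ⟨s - 1 - (i : ℕ), by omega⟩) = fun _ => v := by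
    funext i
    exact hw _ (by simp only; omega)
  rw [this, iteratedFDeriv_apply_self hA hA_conic hX hv j hXd]
  rfl

theorem term_eq_zero (hA : IsOpen A) {j : ℕ}
    {X : E → ContinuousMultilinearMap ℝ (fun _ : Fin (s - j) => E) F}
    (hX : ∀ v ∈ A, X v = 0) (hs : 1 ≤ s) {v : E} (hv : v ∈ A) (w : Fin s → E) :
    ladderTerm v w hs j X = 0 := by
  have h : X =ᶠ[nhds v] fun _ => 0 := by
    filter_upwards [hA.mem_nhds hv] with x hx using hX x hx
  unfold ladderTerm
  rw [(h.iteratedFDeriv ℝ j).eq_of_nhds, iteratedFDeriv_fun_zero]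
  rfl

theorem term_sub (hA : IsOpen A) {j : ℕ}
    {X Y : E → ContinuousMultilinearMap ℝ (fun _ : Fin (s - j) => E) F}
    (hX : ContDiffOn ℝ j X A) (hY : ContDiffOn ℝ j Y A) (hs : 1 ≤ s) {v : E} (hv : v ∈ A)
    (w : Fin s → E) :
    ladderTerm v w hs j (X - Y) = ladderTerm v w hs j X - ladderTerm v w hs j Y := by
  unfold ladderTerm
  rw [iteratedFDeriv_sub_apply (hX.contDiffAt (hA.mem_nhds hv))
    (hY.contDiffAt (hA.mem_nhds hv))]
  rfl

/-- A ladder decomposition of the zero tensor is trivial. -/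
theorem eq_zero_of_sum_term_eq_zero (hA : IsOpen A)
    (hA_conic : ∀ v ∈ A, ∀ lam : ℝ, 0 < lam → lam • v ∈ A) (hs : 1 ≤ s) (hks : k ≤ s)
    {T : E → ContinuousMultilinearMap ℝ (fun _ : Fin (s - k) => E) F}
    {D : (j : Fin k) → E → ContinuousMultilinearMap ℝ (fun _ : Fin (s - (j : ℕ)) => E) F}
    (hTd : ContDiffOn ℝ k T A)
    (hT : ∀ v ∈ A, ∀ lam : ℝ, 0 < lam → T (lam • v) = lam ^ ((α + k : ℕ) : ℝ) • T v)
    (hDd : ∀ j : Fin k, ContDiffOn ℝ (j : ℕ) (D j) A)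
    (hD : ∀ j : Fin k, ∀ v ∈ A, ∀ lam : ℝ, 0 < lam →
      D j (lam • v) = lam ^ ((α + (j : ℕ) : ℕ) : ℝ) • D j v)
    (hDl : ∀ j : Fin k, ∀ v ∈ A, ∀ w : Fin (s - (j : ℕ)) → E,
      w ⟨s - (j : ℕ) - 1, by omega⟩ = v → D j v w = 0)
    (hsum : ∀ v ∈ A, ∀ w : Fin s → E,
      ladderTerm v w hs k T + ∑ j : Fin k, ladderTerm v w hs (j : ℕ) (D j) = 0) :
    (∀ v ∈ A, T v = 0) ∧ ∀ j : Fin k, ∀ v ∈ A, D j v = 0 := by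
  -- Putting the base point into more than `j` slots kills the `j`-th term, by `ι_C Δ_j = 0`.
  have hlow : ∀ (j : Fin k) (p : ℕ), (j : ℕ) < p → ∀ v ∈ A, ∀ w : Fin s → E,
      (∀ i : Fin s, s - p ≤ (i : ℕ) → w i = v) → ladderTerm v w hs (j : ℕ) (D j) = 0 := by
    intro j p hjp v hv w hw
    rw [term_eq_of_tail_eq hA hA_conic (hDd j) (hD j) hs (by omega) hv
      (fun i hi => hw i (by omega)), hDl j v hv _ (hw _ (by simp only; omega)), smul_zero]
  have hfact : ∀ p : ℕ, ((α + p).descFactorial p : ℝ) ≠ 0 := fun p => by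
    exact_mod_cast (Nat.descFactorial_pos.2 (Nat.le_add_left p α)).ne'
  have hT0 : ∀ v ∈ A, T v = 0 := by
    intro v hv
    ext u
    let w : Fin s → E := fun i => if h : (i : ℕ) < s - k then u ⟨i, h⟩ else v
    have hw : ∀ i : Fin s, s - k ≤ (i : ℕ) → w i = v := fun i hi => dif_neg (by omega)
    have h := hsum v hv w
    rw [Finset.sum_eq_zero (fun j _ => hlow j k j.2 v hv w hw), add_zero,
      term_eq_of_tail_eq hA hA_conic hTd hT hs hks hv hw] at h
    have hu : (fun i : Fin (s - k) => w ⟨(i : ℕ), by omega⟩) = u := by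
      funext i
      exact dif_pos i.2
    rw [hu] at h
    exact (smul_eq_zero.1 h).resolve_left (hfact k)
  refine ⟨hT0, fun j => ?_⟩
  -- Downward induction on `j`.
  induction hn : k - (j : ℕ) using Nat.strong_induction_on generalizing j with
  | _ n ih =>
    intro v hv
    ext u
    let w : Fin s → E := fun i => if h : (i : ℕ) < s - (j : ℕ) then u ⟨i, h⟩ else v
    have hw : ∀ i : Fin s, s - (j : ℕ) ≤ (i : ℕ) → w i = v := fun i hi => dif_neg (by omega)
    have h := hsum v hv w
    rw [term_eq_zero hA hT0 hs hv, zero_add, Finset.sum_eq_single j,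
      term_eq_of_tail_eq hA hA_conic (hDd j) (hD j) hs (by omega) hv hw] at h
    · have hu : (fun i : Fin (s - (j : ℕ)) => w ⟨(i : ℕ), by omega⟩) = u := by
        funext i
        exact dif_pos i.2
      rw [hu] at h
      exact (smul_eq_zero.1 h).resolve_left (hfact j)
    · intro i _ hij
      rcases lt_or_gt_of_ne (Fin.val_ne_of_ne hij) with hlt | hgt
      · exact hlow i j hlt v hv w hw
      · exact term_eq_zero hA (ih (k - (i : ℕ)) (by omega) i rfl) hs hv w
    · simp

end

end

/-- **The ladder decomposition with integrability residues** (Theorem 2.4): a `k`-times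
continuously differentiable, positively `α`-homogeneous `s`-covariant tensor `S` on the conic
open set `A ⊆ E \ {0}` (with `k ≥ 1`, `s ≥ k`, `β := α + k`) decomposes uniquely as
`S = ∂̇^k T + Σ_{ν=α+1}^{β} ∂̇^{ν−α−1} Δ_ν`, with `T` positively `β`-homogeneous and each
residue `Δ_ν` positively `(ν−1)`-homogeneous with `ι_C Δ_ν = 0`. -/
theorem stmt_6
    {E F : Type*} [NormedAddCommGroup E] [NormedSpace ℝ E]
    [NormedAddCommGroup F] [NormedSpace ℝ F]
    (A : Set E) (hA_open : IsOpen A) (hA_ne : A.Nonempty)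
    (hA_nz : ∀ v ∈ A, v ≠ 0)
    (hA_conic : ∀ v ∈ A, ∀ lam : ℝ, 0 < lam → lam • v ∈ A)
    (α k : ℕ) (hk : 1 ≤ k) (s : ℕ) (hsk : k ≤ s)
    (S : E → ContinuousMultilinearMap ℝ (fun _ : Fin s => E) F)
    (hS_diff : ContDiffOn ℝ k S A)
    (hS_hom : ∀ v ∈ A, ∀ lam : ℝ, 0 < lam → S (lam • v) = lam ^ ((α : ℕ) : ℝ) • S v) :
    ∃ (T : E → ContinuousMultilinearMap ℝ (fun _ : Fin (s - k) => E) F)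
      (Δ : (j : Fin k) → E → ContinuousMultilinearMap ℝ (fun _ : Fin (s - (j : ℕ)) => E) F),
      LadderDecomp A α k s hk hsk S T Δ ∧
      ∀ (T' : E → ContinuousMultilinearMap ℝ (fun _ : Fin (s - k) => E) F)
        (Δ' : (j : Fin k) → E → ContinuousMultilinearMap ℝ (fun _ : Fin (s - (j : ℕ)) => E) F),
        LadderDecomp A α k s hk hsk S T' Δ' →
          (∀ v ∈ A, T' v = T v) ∧ (∀ j : Fin k, ∀ v ∈ A, Δ' j v = Δ j v) := by
  have hs : 1 ≤ s := hk.trans hsk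
  have hlad : LadderDecomp A α k s hk hsk S (ladder α s S k) (fun j => residue α s S j) := by
    refine ⟨contDiffOn_ladder hS_diff hsk, ladder_homogeneous hS_hom hsk, fun j => ⟨?_, ?_, ?_⟩,
      ?_⟩
    · exact contDiffOn_residue hA_open hS_diff j.2 (by omega)
    · intro v hv lam hl
      exact residue_homogeneous hA_open hk hS_diff hS_hom (by omega) hv hl
    · intro v hv w hw
      exact residue_liouville hA_open hA_conic hk hS_diff hS_hom (by omega) hv w hw
    · intro v hv w
      change S v w = ladderTerm v w hs k (ladder α s S k) +
        ∑ j : Fin k, ladderTerm v w hs (j : ℕ) (residue α s S j)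
      rw [Fin.sum_univ_eq_sum_range (fun j => ladderTerm v w hs j (residue α s S j)),
        Finset.sum_congr rfl (g := fun j => ladderTerm v w hs j (ladder α s S j) -
          ladderTerm v w hs (j + 1) (ladder α s S (j + 1))) (fun j hj => term_residue hA_open hS_diff
          (Finset.mem_range.1 hj) ((Finset.mem_range.1 hj).trans_le hsk) hv w),
        Finset.sum_range_sub' (fun j => ladderTerm v w hs j (ladder α s S j)), add_sub_cancel]
      simp only [ladderTerm, iteratedFDeriv_zero_apply]
      rfl
  refine ⟨_, _, hlad, ?_⟩
  rintro T' Δ' ⟨hT'd, hT', hΔ', hsum'⟩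
  obtain ⟨hTd, hT, hΔ, hsum⟩ := hlad
  beta_reduce at hΔ hsum
  have key := eq_zero_of_sum_term_eq_zero (T := T' - ladder α s S k)
    (D := fun j => Δ' j - residue α s S j) hA_open hA_conic hs hsk (hT'd.sub hTd)
    (fun v hv lam hl => by
      simp only [Pi.sub_apply]; rw [hT' v hv lam hl, hT v hv lam hl, smul_sub])
    (fun j => (hΔ' j).1.sub (hΔ j).1)
    (fun j v hv lam hl => by
      simp only [Pi.sub_apply]; rw [(hΔ' j).2.1 v hv lam hl, (hΔ j).2.1 v hv lam hl, smul_sub])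
    (fun j v hv w hw => by
      simp only [Pi.sub_apply, _root_.sub_apply]
      rw [(hΔ' j).2.2 v hv w hw, (hΔ j).2.2 v hv w hw, sub_zero])
    (fun v hv w => by
      rw [term_sub hA_open hT'd hTd hs hv, Finset.sum_congr rfl
        (fun j _ => term_sub hA_open (hΔ' j).1 (hΔ j).1 hs hv w), Finset.sum_sub_distrib,
        sub_add_sub_comm, sub_eq_zero]
      exact (hsum' v hv w).symm.trans (hsum v hv w))
  exact ⟨fun v hv => sub_eq_zero.1 (key.1 v hv), fun j v hv => sub_eq_zero.1 (key.2 j v hv)⟩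
end

section
/- Let α ≥ 0 and k ≥ 1 be integers, set β := α + k, and let s ≥ k be an integer. Let S be a k-times continuously differentiable, positively α-homogeneous F-valued anisotropic s-covariant tensor on A, and let T (a positively β-homogeneous (s−k)-covariant tensor) together with residues Δ_{α+1},…,Δ_β (each Δ_ν positively (ν−1)-homogeneous with ι_C Δ_ν = 0) give a decomposition S = ∂̇^k T + Σ_{ν=α+1}^{β} ∂̇^{ν−α−1} Δ_ν. Then the k-fold Liouville contraction of S recovers T up to the constant ∏_{ν=α+1}^{β} ν = β!/α!: for all v ∈ A and all w₁,…,w_{s−k} ∈ E, S(v)(w₁,…,w_{s−k}, v, …, v) = (β!/α!) · T(v)(w₁,…,w_{s−k}), where the last k arguments are all set equal to v. (The projection formula (2.9) of Theorem 2.4.) -/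
/-- The derivatives of an `n`-homogeneous map in the radial direction, along the whole ray
through `v`. For `n < m` both sides vanish, `Nat.descFactorial` being zero there, so the truncated
exponent `n - m` is harmless. -/
lemma iteratedFDeriv_ray_of_homogeneous {E G : Type*} [NormedAddCommGroup E] [NormedSpace ℝ E]
    [NormedAddCommGroup G] [NormedSpace ℝ G] {A : Set E} (hA : IsOpen A) {v : E}
    (hray : ∀ t : ℝ, 0 < t → t • v ∈ A) {f : E → G} {n : ℕ}
    (hhom : ∀ t : ℝ, 0 < t → f (t • v) = t ^ n • f v) (m : ℕ) (hf : ContDiffOn ℝ m f A) :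
    ∀ t : ℝ, 0 < t → iteratedFDeriv ℝ m f (t • v) (fun _ => v) =
      ((n.descFactorial m : ℝ) * t ^ (n - m)) • f v := by
  induction m with
  | zero => intro t ht; simp [hhom t ht]
  | succ m ih =>
    intro t ht
    have ih := ih (hf.of_le (by exact_mod_cast Nat.le_succ m))
    have hdiff : DifferentiableAt ℝ (iteratedFDeriv ℝ m f) (t • v) :=
      (hf.contDiffAt (hA.mem_nhds (hray t ht))).differentiableAt_iteratedFDeriv
        (by exact_mod_cast Nat.lt_succ_self m)
    have hline : HasDerivAt (fun r : ℝ => r • v) v t := by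
      simpa using (hasDerivAt_id t).smul_const v
    have h1 : HasDerivAt (fun r : ℝ => iteratedFDeriv ℝ m f (r • v) (fun _ => v))
        (fderiv ℝ (iteratedFDeriv ℝ m f) (t • v) v (fun _ => v)) t :=
      ((ContinuousMultilinearMap.apply ℝ (fun _ : Fin m => E) G
        (fun _ => v)).hasFDerivAt).comp_hasDerivAt t
        (hdiff.hasFDerivAt.comp_hasDerivAt t hline)
    have h2 : HasDerivAt (fun r : ℝ => ((n.descFactorial m : ℝ) * r ^ (n - m)) • f v)
        (((n.descFactorial m : ℝ) * (((n - m : ℕ) : ℝ) * t ^ (n - m - 1))) • f v) t :=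
      ((hasDerivAt_pow (n - m) t).const_mul _).smul_const _
    have h3 := h2.congr_of_eventuallyEq
      ((eventually_gt_nhds ht).mono fun r hr => ih r hr)
    rw [iteratedFDeriv_succ_apply_left]
    refine (h1.unique h3).trans ?_
    rw [Nat.descFactorial_succ, Nat.sub_sub]
    push_cast
    congr 1
    ring

/-- Iterated Euler identity for a map that is positively homogeneous of degree `n` on an open
cone. -/
lemma iteratedFDeriv_self_of_homogeneous {E G : Type*} [NormedAddCommGroup E] [NormedSpace ℝ E]
    [NormedAddCommGroup G] [NormedSpace ℝ G] {A : Set E} (hA : IsOpen A)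
    (hconic : ∀ v ∈ A, ∀ lam : ℝ, 0 < lam → lam • v ∈ A) {f : E → G} {n m : ℕ}
    (hhom : ∀ v ∈ A, ∀ lam : ℝ, 0 < lam → f (lam • v) = lam ^ (n : ℝ) • f v)
    (hf : ContDiffOn ℝ m f A) {v : E} (hv : v ∈ A) :
    iteratedFDeriv ℝ m f v (fun _ => v) = (n.descFactorial m : ℝ) • f v := by
  have h := iteratedFDeriv_ray_of_homogeneous hA (hconic v hv)
    (fun t ht => by rw [hhom v hv t ht, Real.rpow_natCast]) m hf 1 one_pos
  simpa using h

/-- **The projection formula (2.9) of Theorem 2.4**: if the `k`-times continuously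
differentiable, positively `α`-homogeneous `s`-covariant tensor `S` on the conic open set
`A ⊆ E \ {0}` decomposes as `S = ∂̇^k T + Σ_{ν=α+1}^{β} ∂̇^{ν−α−1} Δ_ν` (`β := α + k`),
then the `k`-fold Liouville contraction of `S` (its last `k` arguments all set equal to the
base point `v`) recovers `T` up to the constant `∏_{ν=α+1}^{β} ν = β!/α!`. -/
theorem stmt_7
    {E F : Type*} [NormedAddCommGroup E] [NormedSpace ℝ E]
    [NormedAddCommGroup F] [NormedSpace ℝ F]
    (A : Set E) (hA_open : IsOpen A) (hA_ne : A.Nonempty)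
    (hA_nz : ∀ v ∈ A, v ≠ 0)
    (hA_conic : ∀ v ∈ A, ∀ lam : ℝ, 0 < lam → lam • v ∈ A)
    (α k : ℕ) (hk : 1 ≤ k) (s : ℕ) (hsk : k ≤ s)
    (S : E → ContinuousMultilinearMap ℝ (fun _ : Fin s => E) F)
    (hS_diff : ContDiffOn ℝ k S A)
    (hS_hom : ∀ v ∈ A, ∀ lam : ℝ, 0 < lam → S (lam • v) = lam ^ ((α : ℕ) : ℝ) • S v)
    (T : E → ContinuousMultilinearMap ℝ (fun _ : Fin (s - k) => E) F)
    (Δ : (j : Fin k) → E → ContinuousMultilinearMap ℝ (fun _ : Fin (s - (j : ℕ)) => E) F)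
    (hdec : LadderDecomp A α k s hk hsk S T Δ) :
    ∀ v ∈ A, ∀ w : Fin (s - k) → E,
      S v (fun i : Fin s => if h : (i : ℕ) < s - k then w ⟨(i : ℕ), h⟩ else v) =
        (((α + k).factorial : ℝ) / (α.factorial : ℝ)) • T v w := by
  obtain ⟨hT, hThom, hΔ, hS⟩ := hdec
  intro v hv w
  rw [hS v hv]
  have hlast : ∀ j : ℕ, j ≤ k → (fun i : Fin j =>
      (fun i : Fin s => if h : (i : ℕ) < s - k then w ⟨(i : ℕ), h⟩ else v)
        ⟨s - 1 - (i : ℕ), by omega⟩) = fun _ => v := by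
    intro j hj
    funext i
    have := i.isLt
    exact dif_neg (by dsimp only; omega)
  rw [Finset.sum_eq_zero, add_zero]
  · rw [hlast k le_rfl, iteratedFDeriv_self_of_homogeneous hA_open hA_conic hThom hT hv]
    have hw : (fun i : Fin (s - k) =>
        (fun i : Fin s => if h : (i : ℕ) < s - k then w ⟨(i : ℕ), h⟩ else v)
          ⟨(i : ℕ), by omega⟩) = w := by
      funext i
      exact dif_pos i.isLt
    rw [hw, smul_apply]
    congr 1
    rw [eq_div_iff (by positivity), mul_comm]
    have := Nat.factorial_mul_descFactorial (Nat.le_add_left k α)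
    rw [Nat.add_sub_cancel] at this
    exact_mod_cast this
  · intro j _
    obtain ⟨hd, hh, hz⟩ := hΔ j
    have := j.isLt
    rw [hlast j j.isLt.le, iteratedFDeriv_self_of_homogeneous hA_open hA_conic hh hd hv,
      smul_apply, hz v hv _ (dif_neg (by dsimp only; omega)), smul_zero]
end

section
/- Let E be a finite-dimensional real normed vector space and let ℓ : A → (E →L[ℝ] ℝ) be twice continuously differentiable and positively 1-homogeneous, and assume that for every v ∈ A the bilinear form (u, w) ↦ (fderiv ℝ ℓ v w)(u) on E is nondegenerate (ℓ is a Legendre transformation). Then the following are equivalent: (i) the vertical derivative of ℓ is symmetric, i.e. (fderiv ℝ ℓ v w)(u) = (fderiv ℝ ℓ v u)(w) for all v ∈ A and u, w ∈ E; (ii) the residue of ℓ vanishes, i.e. ℓ(v)(u) = (fderiv ℝ ℓ v u)(v) for all v ∈ A and u ∈ E; (iii) there exists a twice continuously differentiable, positively 2-homogeneous function L : A → ℝ with ℓ(v) = fderiv ℝ L v for all v ∈ A (and in that case necessarily L(v) = (1/2)·ℓ(v)(v)). (Proposition 3.5: a Legendre transformation arises from a semi-Finsler Lagrangian if and only if its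 vertical derivative is symmetric, if and only if its residue is zero.) -/
/-!
By Euler's relation (`fderiv_apply_self_of_homogeneous`), `ℓ v = fderiv ℝ ℓ v v`, so the residue
condition is the symmetry of the vertical derivative with one argument equal to `v`; this is
(i) ⇒ (ii). If the residue vanishes, the product rule applied to `L v = (1/2) ℓ v v` gives
`fderiv ℝ L v u = (1/2) (fderiv ℝ ℓ v u v + ℓ v u) = ℓ v u`, which is (ii) ⇒ (iii). If `ℓ` is the
differential of a `C²` function, its vertical derivative is a Hessian, which is symmetric by
Schwarz's theorem; this is (iii) ⇒ (i). The formula for `L` is Euler's relation in degree 2.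
-/

/-- Euler's relation: the radial derivative of a positively `α`-homogeneous map is `α` times
the map. -/
theorem fderiv_apply_self_of_homogeneous_s8 {E F : Type*} [NormedAddCommGroup E] [NormedSpace ℝ E]
    [NormedAddCommGroup F] [NormedSpace ℝ F] {f : E → F} {v : E} (α : ℝ)
    (hd : DifferentiableAt ℝ f v)
    (hf : ∀ lam : ℝ, 0 < lam → f (lam • v) = lam ^ α • f v) :
    fderiv ℝ f v v = α • f v := by
  have hray : HasDerivAt (fun t : ℝ => t • v) v 1 := by
    simpa using (hasDerivAt_id (1 : ℝ)).smul_const v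
  have h₁ : HasDerivAt (fun t : ℝ => f (t • v)) (fderiv ℝ f v v) 1 := by
    have hd' : HasFDerivAt f (fderiv ℝ f v) ((1 : ℝ) • v) := by
      simpa using hd.hasFDerivAt
    exact hd'.comp_hasDerivAt (1 : ℝ) hray
  have h₂ : HasDerivAt (fun t : ℝ => t ^ α • f v) (α • f v) 1 := by
    simpa using
      (Real.hasDerivAt_rpow_const (x := 1) (p := α) (Or.inl one_ne_zero)).smul_const (f v)
  -- The two curves agree only for positive parameters, that is, near `t = 1`.
  have heq : (fun t : ℝ => f (t • v)) =ᶠ[nhds 1] fun t : ℝ => t ^ α • f v := by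
    filter_upwards [lt_mem_nhds (zero_lt_one' ℝ)] with t ht using hf t ht
  exact h₁.unique (h₂.congr_of_eventuallyEq heq)


/-- **Proposition 3.5**: for a Legendre transformation `ℓ` (a twice continuously
differentiable, positively 1-homogeneous map from the conic open set `A ⊆ E \ {0}` to the
dual of `E` with nondegenerate vertical derivative), the following are equivalent:
(i) the vertical derivative of `ℓ` is symmetric (i.e. `∂̇ℓ` is an anisotropic metric);
(ii) the residue of `ℓ` vanishes: `ℓ(v)(u) = (fderiv ℝ ℓ v u)(v)`;
(iii) `ℓ` is the Legendre transformation associated with a semi-Finsler Lagrangian `L`,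
and in that case necessarily `L(v) = (1/2)·ℓ(v)(v)`. -/
theorem stmt_8
    {E : Type*} [NormedAddCommGroup E] [NormedSpace ℝ E] [FiniteDimensional ℝ E]
    (A : Set E) (hA_open : IsOpen A) (hA_ne : A.Nonempty)
    (hA_nz : ∀ v ∈ A, v ≠ 0)
    (hA_conic : ∀ v ∈ A, ∀ lam : ℝ, 0 < lam → lam • v ∈ A)
    (ℓ : E → (E →L[ℝ] ℝ))
    (hℓ_diff : ContDiffOn ℝ 2 ℓ A)
    (hℓ_hom : ∀ v ∈ A, ∀ lam : ℝ, 0 < lam → ℓ (lam • v) = lam ^ (1 : ℝ) • ℓ v)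
    (hℓ_nondeg : ∀ v ∈ A, ∀ u : E, (∀ w : E, (fderiv ℝ ℓ v w) u = 0) → u = 0) :
    ((∀ v ∈ A, ∀ u w : E, (fderiv ℝ ℓ v w) u = (fderiv ℝ ℓ v u) w) ↔
        (∀ v ∈ A, ∀ u : E, ℓ v u = (fderiv ℝ ℓ v u) v)) ∧
    ((∀ v ∈ A, ∀ u : E, ℓ v u = (fderiv ℝ ℓ v u) v) ↔
        (∃ L : E → ℝ, ContDiffOn ℝ 2 L A ∧
          (∀ v ∈ A, ∀ lam : ℝ, 0 < lam → L (lam • v) = lam ^ (2 : ℝ) • L v) ∧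
          ∀ v ∈ A, ℓ v = fderiv ℝ L v)) ∧
    (∀ L : E → ℝ, ContDiffOn ℝ 2 L A →
      (∀ v ∈ A, ∀ lam : ℝ, 0 < lam → L (lam • v) = lam ^ (2 : ℝ) • L v) →
      (∀ v ∈ A, ℓ v = fderiv ℝ L v) →
      ∀ v ∈ A, L v = (1 / 2) * ℓ v v) := by
  have hdiff : ∀ v ∈ A, DifferentiableAt ℝ ℓ v := fun v hv =>
    (hℓ_diff.contDiffAt (hA_open.mem_nhds hv)).differentiableAt two_ne_zero
  have h12 : (∀ v ∈ A, ∀ u w : E, (fderiv ℝ ℓ v w) u = (fderiv ℝ ℓ v u) w) →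
      ∀ v ∈ A, ∀ u : E, ℓ v u = (fderiv ℝ ℓ v u) v := by
    intro h v hv u
    rw [← h v hv u v, fderiv_apply_self_of_homogeneous_s8 1 (hdiff v hv) (hℓ_hom v hv), one_smul]
  have h23 : (∀ v ∈ A, ∀ u : E, ℓ v u = (fderiv ℝ ℓ v u) v) →
      ∃ L : E → ℝ, ContDiffOn ℝ 2 L A ∧
        (∀ v ∈ A, ∀ lam : ℝ, 0 < lam → L (lam • v) = lam ^ (2 : ℝ) • L v) ∧
        ∀ v ∈ A, ℓ v = fderiv ℝ L v := by
    intro h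
    refine ⟨fun v => (1 / 2 : ℝ) * ℓ v v,
      contDiffOn_const.mul (hℓ_diff.clm_apply contDiffOn_id), ?_, ?_⟩
    · intro v hv lam hlam
      simp only [hℓ_hom v hv lam hlam, Real.rpow_one, Real.rpow_two, map_smul, smul_eq_mul,
        smul_apply]
      ring
    · intro v hv
      have hL := ((hdiff v hv).hasFDerivAt.clm_apply (hasFDerivAt_id v)).const_mul (1 / 2 : ℝ)
      ext u
      have hu : fderiv ℝ (fun v => (1 / 2 : ℝ) * ℓ v v) v u
          = 1 / 2 * (ℓ v u + fderiv ℝ ℓ v u v) := by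
        simpa [mul_add] using congrArg (fun T : E →L[ℝ] ℝ => T u) hL.fderiv
      rw [hu, ← h v hv u]
      ring
  have h31 : (∃ L : E → ℝ, ContDiffOn ℝ 2 L A ∧
        (∀ v ∈ A, ∀ lam : ℝ, 0 < lam → L (lam • v) = lam ^ (2 : ℝ) • L v) ∧
        ∀ v ∈ A, ℓ v = fderiv ℝ L v) →
      ∀ v ∈ A, ∀ u w : E, (fderiv ℝ ℓ v w) u = (fderiv ℝ ℓ v u) w := by
    rintro ⟨L, hL, -, hℓL⟩ v hv u w
    have heq : ℓ =ᶠ[nhds v] fderiv ℝ L := by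
      filter_upwards [hA_open.mem_nhds hv] with x hx using hℓL x hx
    have hsymm : IsSymmSndFDerivAt ℝ L v :=
      (hL.contDiffAt (hA_open.mem_nhds hv)).isSymmSndFDerivAt (by simp)
    rw [heq.fderiv_eq]
    exact hsymm.eq w u
  refine ⟨⟨h12, fun h => h31 (h23 h)⟩, ⟨h23, fun h => h12 (h31 h)⟩, ?_⟩
  intro L hL hhom hℓL v hv
  have hLd : DifferentiableAt ℝ L v :=
    (hL.contDiffAt (hA_open.mem_nhds hv)).differentiableAt two_ne_zero
  rw [hℓL v hv, fderiv_apply_self_of_homogeneous_s8 2 hLd (hhom v hv), smul_eq_mul]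
  ring
end

section
/- Let g : A → (E →L[ℝ] E →L[ℝ] ℝ) be continuously differentiable and positively 0-homogeneous, with each g(v) a symmetric bilinear form, and assume its vertical derivative is totally symmetric: (fderiv ℝ g v u)(w₁)(w₂) = (fderiv ℝ g v w₁)(u)(w₂) for all v ∈ A and u, w₁, w₂ ∈ E. Define L : A → ℝ by L(v) := g(v)(v)(v). Then L is positively 2-homogeneous and twice continuously differentiable, with (fderiv ℝ L v)(w) = 2·g(v)(v)(w) and (fderiv ℝ (fun v => fderiv ℝ L v) v u)(w) = 2·g(v)(u)(w) for all v ∈ A and u, w ∈ E; that is, g is the fundamental tensor (1/2)·∂̇²L of the Lagrangian L. (The characterization discussed in Remark 3.6: a 0-homogeneous symmetric tensor whose vertical derivative is totally symmetric is the fundamental tensor of a 2-homogeneous Lagrangian.) -/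
/-!
Euler's relation for the 0-homogeneous `g` gives `∂̇g(v)(v) = 0` (`fderiv_self_of_homogeneous`).
By total symmetry of `∂̇g`, also `∂̇g(v)(u)(v) = ∂̇g(v)(v)(u) = 0`, so in the product rule every
term that differentiates `g` itself drops out: the map `v ↦ g(v)(v)` has derivative `g(v)`, and, by symmetry of `g`,
`v ↦ g(v)(v)(v)` has derivative `2 g(v)(v)`. The latter is `C¹` because `g` is, so `L` is `C²`,
and differentiating once more gives `2 g(v)`.
-/

/-- Euler's relation for a differentiable positively 0-homogeneous map: its derivative vanishes
in the radial direction. -/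
theorem fderiv_self_of_homogeneous {E F : Type*} [NormedAddCommGroup E] [NormedSpace ℝ E]
    [NormedAddCommGroup F] [NormedSpace ℝ F] {g : E → F} {v : E}
    (hd : DifferentiableAt ℝ g v) (hom : ∀ lam : ℝ, 0 < lam → g (lam • v) = g v) :
    fderiv ℝ g v v = 0 := by
  have h1 : HasDerivAt (fun t : ℝ => t • v) v 1 := by
    simpa using (hasDerivAt_id (1 : ℝ)).smul_const v
  have h2 : HasFDerivAt g (fderiv ℝ g v) ((1 : ℝ) • v) := by
    simpa using hd.hasFDerivAt
  have h3 := h2.comp_hasDerivAt (1 : ℝ) h1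
  have h4 : HasDerivAt (g ∘ fun t : ℝ => t • v) 0 1 := by
    refine (hasDerivAt_const (1 : ℝ) (g v)).congr_of_eventuallyEq ?_
    filter_upwards [lt_mem_nhds (zero_lt_one (α := ℝ))] with t ht using hom t ht
  exact h3.unique h4

/-- **Remark 3.6**: a continuously differentiable, positively 0-homogeneous symmetric
anisotropic tensor `g` on the conic open set `A ⊆ E \ {0}` whose vertical derivative is
totally symmetric is the fundamental tensor `(1/2)·∂̇²L` of the positively 2-homogeneous
Lagrangian `L(v) := g(v)(v)(v)`: `L` is twice continuously differentiable with
`∂̇L(v)(w) = 2·g(v)(v)(w)` and `∂̇²L(v)(u)(w) = 2·g(v)(u)(w)`. -/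
theorem stmt_9
    {E : Type*} [NormedAddCommGroup E] [NormedSpace ℝ E]
    (A : Set E) (hA_open : IsOpen A) (hA_ne : A.Nonempty)
    (hA_nz : ∀ v ∈ A, v ≠ 0)
    (hA_conic : ∀ v ∈ A, ∀ lam : ℝ, 0 < lam → lam • v ∈ A)
    (g : E → (E →L[ℝ] E →L[ℝ] ℝ))
    (hg_diff : ContDiffOn ℝ 1 g A)
    (hg_hom : ∀ v ∈ A, ∀ lam : ℝ, 0 < lam → g (lam • v) = g v)
    (hg_symm : ∀ v ∈ A, ∀ u w : E, g v u w = g v w u)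
    (hg_vsymm : ∀ v ∈ A, ∀ u w₁ w₂ : E, (fderiv ℝ g v u) w₁ w₂ = (fderiv ℝ g v w₁) u w₂)
    (L : E → ℝ) (hL : ∀ v : E, L v = g v v v) :
    (∀ v ∈ A, ∀ lam : ℝ, 0 < lam → L (lam • v) = lam ^ (2 : ℝ) • L v) ∧
    ContDiffOn ℝ 2 L A ∧
    (∀ v ∈ A, ∀ w : E, fderiv ℝ L v w = 2 * g v v w) ∧
    (∀ v ∈ A, ∀ u w : E, (fderiv ℝ (fun x => fderiv ℝ L x) v u) w = 2 * g v u w) := by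
  have hd : ∀ v ∈ A, DifferentiableAt ℝ g v := fun v hv =>
    (hg_diff.differentiableOn (by norm_num)).differentiableAt (hA_open.mem_nhds hv)
  have euler : ∀ v ∈ A, ∀ u w : E, fderiv ℝ g v u v w = 0 := fun v hv u w => by
    rw [hg_vsymm v hv u v w, fderiv_self_of_homogeneous (hd v hv) (hg_hom v hv)]
    rfl
  have hgv : ∀ v ∈ A, HasFDerivAt (fun x => g x x) (g v) v := fun v hv => by
    refine ((hd v hv).hasFDerivAt.clm_apply (hasFDerivAt_id v)).congr_fderiv ?_
    ext u w
    simp [euler v hv]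
  have hLeq : L = fun x => g x x x := funext hL
  have hL' : ∀ v ∈ A, HasFDerivAt L ((2 : ℝ) • g v v) v := fun v hv => by
    rw [hLeq]
    refine ((hgv v hv).clm_apply (hasFDerivAt_id v)).congr_fderiv ?_
    ext w
    simp [hg_symm v hv w v, two_mul]
  have hL'' : ∀ v ∈ A, HasFDerivAt (fun x => fderiv ℝ L x) ((2 : ℝ) • g v) v := fun v hv => by
    refine ((hgv v hv).const_smul (2 : ℝ)).congr_of_eventuallyEq ?_
    filter_upwards [hA_open.mem_nhds hv] with x hx using (hL' x hx).fderiv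
  refine ⟨fun v hv lam hlam => ?_, ?_, fun v hv w => ?_, fun v hv u w => ?_⟩
  · rw [hL, hL, hg_hom v hv lam hlam, Real.rpow_two]
    simp only [map_smul, smul_apply, smul_eq_mul]
    ring
  · rw [show (2 : WithTop ℕ∞) = 1 + 1 by norm_num,
      contDiffOn_succ_iff_fderiv_of_isOpen hA_open]
    refine ⟨fun v hv => (hL' v hv).differentiableAt.differentiableWithinAt, by simp, ?_⟩
    exact ((hg_diff.clm_apply contDiffOn_id).const_smul (2 : ℝ)).congr
      fun x hx => (hL' x hx).fderiv
  · simp [(hL' v hv).fderiv]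
  · simp [(hL'' v hv).fderiv]
end

section
/- Let V be a finite-dimensional real vector space, φ a symmetric nondegenerate bilinear form on V, v ∈ V with φ(v,v) ≠ 0, and κ ∈ ℝ. Define the symmetric bilinear form g on V by g(u,w) := φ(u,w) + κ·φ(v,u)·φ(v,w)/φ(v,v). Then g is nondegenerate if and only if κ ≠ −1. (From Example 4.3, the observer-dependent Wick rotation: regularity of the rotated metric.) -/
/-!
The form `g` restricts to `φ` on the `φ`-orthogonal complement of `v`, while on the line
spanned by `v` it is scaled by `1 + κ`: one has `g u v = (1 + κ) * φ v u` for all `u`.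
Hence `g` degenerates exactly when `1 + κ = 0`, and then `v` lies in its radical.
-/

/-- **Example 4.3 (observer-dependent Wick rotation), regularity**: for a symmetric
nondegenerate bilinear form `φ` on a finite-dimensional real vector space `V`, a vector `v`
with `φ(v,v) ≠ 0` and `κ ∈ ℝ`, the symmetric bilinear form
`g(u,w) := φ(u,w) + κ·φ(v,u)·φ(v,w)/φ(v,v)` is nondegenerate if and only if `κ ≠ −1`. -/
theorem stmt_10
    {V : Type*} [AddCommGroup V] [Module ℝ V] [FiniteDimensional ℝ V]
    (φ : V →ₗ[ℝ] V →ₗ[ℝ] ℝ)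
    (hφ_symm : ∀ u w : V, φ u w = φ w u)
    (hφ_nondeg : ∀ u : V, u ≠ 0 → ∃ w : V, φ u w ≠ 0)
    (v : V) (hv : φ v v ≠ 0) (κ : ℝ)
    (g : V → V → ℝ)
    (hg : ∀ u w : V, g u w = φ u w + κ * φ v u * φ v w / φ v v) :
    (∀ u : V, u ≠ 0 → ∃ w : V, g u w ≠ 0) ↔ κ ≠ -1 := by
  constructor
  · -- For `κ = -1` the vector `v` itself lies in the radical of `g`.
    rintro h rfl
    have hv0 : v ≠ 0 := by
      rintro rfl
      simp at hv
    obtain ⟨w, hw⟩ := h v hv0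
    apply hw
    rw [hg]
    field_simp
    ring
  · intro hκ u hu
    by_cases h : φ v u = 0
    · -- On the `φ`-orthogonal complement of `v`, `g u` agrees with `φ u`.
      obtain ⟨w, hw⟩ := hφ_nondeg u hu
      exact ⟨w, by simpa [hg, h] using hw⟩
    · -- Otherwise `v` itself is a witness, as `g u v = (1 + κ) * φ v u`.
      refine ⟨v, ?_⟩
      have key : g u v = (1 + κ) * φ v u := by
        rw [hg, hφ_symm u v]
        field_simp
      rw [key]
      exact mul_ne_zero (fun h1 => hκ (by linarith)) h
end

section
/- Let V be a finite-dimensional real vector space, φ a symmetric nondegenerate bilinear form on V, v ∈ V with φ(v,v) ≠ 0, and κ ∈ ℝ with κ > −1. Define the symmetric bilinear form g on V by g(u,w) := φ(u,w) + κ·φ(v,u)·φ(v,w)/φ(v,v). Then the quadratic forms associated with g and with φ are equivalent, i.e. there exists a linear automorphism f of V such that g(u,u) = φ(f(u), f(u)) for all u ∈ V (g and φ have the same signature). (From Example 4.3.) -/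
/-!
Since `φ v v ≠ 0`, the space splits as `ℝ v ⊕ v^⊥`. The form `g` agrees with `φ` on `v^⊥`, keeps the
two summands orthogonal, and is `(1 + κ) φ` on the line `ℝ v`. As `1 + κ > 0`, the map that scales
`v` by `√(1 + κ)` and fixes `v^⊥` is an automorphism pulling `φ` back to `g`.
-/

/-- The linear map `u ↦ u + (t - 1) (φ(v,u) / φ(v,v)) v`. When `φ` is symmetric and `φ v v ≠ 0`, it
multiplies `v` by `t` and fixes the `φ`-orthogonal complement of `v`. -/
noncomputable def scaleAlong {V : Type*} [AddCommGroup V] [Module ℝ V]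
    (φ : V →ₗ[ℝ] V →ₗ[ℝ] ℝ) (v : V) (t : ℝ) : V →ₗ[ℝ] V :=
  LinearMap.id + ((t - 1) / φ v v) • (φ v).smulRight v

lemma scaleAlong_apply {V : Type*} [AddCommGroup V] [Module ℝ V]
    (φ : V →ₗ[ℝ] V →ₗ[ℝ] ℝ) (v : V) (t : ℝ) (u : V) :
    scaleAlong φ v t u = u + ((t - 1) / φ v v * φ v u) • v := by
  simp [scaleAlong, smul_smul]

lemma scaleAlong_comp {V : Type*} [AddCommGroup V] [Module ℝ V]
    (φ : V →ₗ[ℝ] V →ₗ[ℝ] ℝ) (v : V) (hv : φ v v ≠ 0) {s t : ℝ} (h : s * t = 1) :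
    scaleAlong φ v s ∘ₗ scaleAlong φ v t = LinearMap.id := by
  ext u
  rw [LinearMap.comp_apply, scaleAlong_apply φ v s, scaleAlong_apply φ v t, map_add, map_smul,
    smul_eq_mul, LinearMap.id_apply, add_assoc, ← add_smul]
  have : (t - 1) / φ v v * φ v u
      + (s - 1) / φ v v * (φ v u + (t - 1) / φ v v * φ v u * φ v v) = 0 := by
    field_simp
    linear_combination φ v u * h
  rw [this, zero_smul, add_zero]

/-- **Example 4.3, case `κ > −1`**: for a symmetric nondegenerate bilinear form `φ` on a
finite-dimensional real vector space `V`, a vector `v` with `φ(v,v) ≠ 0` and `κ > −1`, the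
quadratic forms of `g(u,w) := φ(u,w) + κ·φ(v,u)·φ(v,w)/φ(v,v)` and of `φ` are equivalent:
there is a linear automorphism `f` of `V` with `g(u,u) = φ(f(u),f(u))` for all `u`
(`g` and `φ` have the same signature). -/
theorem stmt_11
    {V : Type*} [AddCommGroup V] [Module ℝ V] [FiniteDimensional ℝ V]
    (φ : V →ₗ[ℝ] V →ₗ[ℝ] ℝ)
    (hφ_symm : ∀ u w : V, φ u w = φ w u)
    (hφ_nondeg : ∀ u : V, u ≠ 0 → ∃ w : V, φ u w ≠ 0)
    (v : V) (hv : φ v v ≠ 0) (κ : ℝ) (hκ : -1 < κ)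
    (g : V → V → ℝ)
    (hg : ∀ u w : V, g u w = φ u w + κ * φ v u * φ v w / φ v v) :
    ∃ f : V ≃ₗ[ℝ] V, ∀ u : V, g u u = φ (f u) (f u) := by
  have hpos : 0 < 1 + κ := by linarith
  have hs : √(1 + κ) ≠ 0 := (Real.sqrt_pos.mpr hpos).ne'
  have hsq : √(1 + κ) ^ 2 = 1 + κ := Real.sq_sqrt hpos.le
  refine ⟨LinearEquiv.ofLinearMap (scaleAlong φ v √(1 + κ)) (scaleAlong φ v (√(1 + κ))⁻¹)
    (scaleAlong_comp φ v hv (mul_inv_cancel₀ hs))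
    (scaleAlong_comp φ v hv (inv_mul_cancel₀ hs)), fun u => ?_⟩
  simp only [hg, LinearEquiv.coe_ofLinearMap, scaleAlong_apply, map_add, map_smul, smul_eq_mul,
    LinearMap.add_apply, LinearMap.smul_apply, hφ_symm u v]
  field_simp
  linear_combination -(φ v u) ^ 2 * hsq
end

section
/- Let V be a finite-dimensional real vector space, φ a symmetric nondegenerate bilinear form on V, v ∈ V with φ(v,v) ≠ 0, and κ ∈ ℝ with κ < −1. Define the symmetric bilinear form g on V by g(u,w) := φ(u,w) + κ·φ(v,u)·φ(v,w)/φ(v,v). Then the quadratic forms associated with g and with φ are NOT equivalent: there is no linear automorphism f of V such that g(u,u) = φ(f(u), f(u)) for all u ∈ V (the signature changes, switching exactly one sign in the direction of v). (From Example 4.3.) -/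
/-!
The form `g` is `φ(T u, w)`, where `T u = u + κ φ(v,u)/φ(v,v) • v` has determinant `1 + κ < 0`.
If `f` carried the quadratic form of `g` to that of `φ`, polarization would give
`φ(T u, w) = φ(f u, f w)`, and comparing Gram determinants in a basis,
`(1 + κ) det Φ = (det f)² det Φ`. Since `φ` is nondegenerate, `det Φ ≠ 0`, so `1 + κ` would be a
square: the discriminant already separates the two forms, without Sylvester's law of inertia.
-/


/-- **Example 4.3, case `κ < −1`**: for a symmetric nondegenerate bilinear form `φ` on a
finite-dimensional real vector space `V`, a vector `v` with `φ(v,v) ≠ 0` and `κ < −1`, the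
quadratic forms of `g(u,w) := φ(u,w) + κ·φ(v,u)·φ(v,w)/φ(v,v)` and of `φ` are NOT
equivalent: there is no linear automorphism `f` of `V` with `g(u,u) = φ(f(u),f(u))` for all
`u` (the signature changes, switching exactly one sign in the direction of `v`). -/
theorem stmt_12
    {V : Type*} [AddCommGroup V] [Module ℝ V] [FiniteDimensional ℝ V]
    (φ : V →ₗ[ℝ] V →ₗ[ℝ] ℝ)
    (hφ_symm : ∀ u w : V, φ u w = φ w u)
    (hφ_nondeg : ∀ u : V, u ≠ 0 → ∃ w : V, φ u w ≠ 0)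
    (v : V) (hv : φ v v ≠ 0) (κ : ℝ) (hκ : κ < -1)
    (g : V → V → ℝ)
    (hg : ∀ u w : V, g u w = φ u w + κ * φ v u * φ v w / φ v v) :
    ¬ ∃ f : V ≃ₗ[ℝ] V, ∀ u : V, g u u = φ (f u) (f u) := by
  rintro ⟨f, hf⟩
  set T : V →ₗ[ℝ] V := LinearMap.transvection ((κ / φ v v) • φ v) v with hT
  have hTdet : LinearMap.det T = 1 + κ := by
    rw [hT, LinearMap.transvection.det, LinearMap.smul_apply, smul_eq_mul, div_mul_cancel₀ _ hv]
  have hTg : ∀ u w : V, φ (T u) w = g u w := by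
    intro u w
    simp only [hT, LinearMap.transvection.apply, LinearMap.smul_apply, map_add, map_smul,
      LinearMap.add_apply, smul_eq_mul, hg]
    ring
  -- Polarization: the quadratic identity determines the symmetric bilinear forms.
  have hpolar : ∀ u w : V, φ (T u) w = φ (f u) (f w) := by
    intro u w
    have h1 := hf (u + w)
    have h2 := hf u
    have h3 := hf w
    have h4 : g u w = g w u := by
      rw [hg, hg, hφ_symm u w]
      ring
    simp only [← hTg, map_add, LinearMap.add_apply] at h1 h2 h3 h4 ⊢
    linarith [hφ_symm (f u) (f w)]
  let b := Module.finBasis ℝ V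
  have hcomp : φ.compl₁₂ T LinearMap.id = φ.compl₁₂ (f : V →ₗ[ℝ] V) (f : V →ₗ[ℝ] V) := by
    ext u w
    exact hpolar u w
  have hdet := congrArg (fun B => (LinearMap.toMatrix₂ b b B).det) hcomp
  simp only [LinearMap.toMatrix₂_compl₁₂ b b b b, Matrix.det_mul, Matrix.det_transpose,
    LinearMap.det_toMatrix, LinearMap.det_id, hTdet] at hdet
  have hne : (LinearMap.toMatrix₂ b b φ).det ≠ 0 := by
    rw [← LinearMap.separatingLeft_iff_det_ne_zero]
    intro u hu
    by_contra h
    obtain ⟨w, hw⟩ := hφ_nondeg u h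
    exact hw (hu w)
  have hsq : 1 + κ = LinearMap.det (f : V →ₗ[ℝ] V) ^ 2 :=
    mul_right_cancel₀ hne (by linarith)
  linarith [sq_nonneg (LinearMap.det (f : V →ₗ[ℝ] V))]
end

section
/- Let U ⊆ E be open and φ : U → E of class C²; write Dφ(x) := fderiv ℝ φ x and D²φ(x) := fderiv ℝ (fun x => fderiv ℝ φ x) x. Let Ω ⊆ U × E be open, let Ṽ ⊆ E × E, and let G : Ω → E and G̃ : Ṽ → E be maps such that for every x the partial maps y ↦ G(x,y) and ỹ ↦ G̃(x̃,ỹ) are differentiable on their domains. Assume (φ(x), Dφ(x) y) ∈ Ṽ for all (x,y) ∈ Ω and that the spray transformation cocycle holds: G̃(φ(x), Dφ(x) y) = −(1/2)·D²φ(x)(y)(y) + Dφ(x)(G(x,y)) for all (x,y) ∈ Ω. Then for every (x,y) ∈ Ω, the fiber derivatives N := fderiv ℝ (fun y' => G(x,y')) y and Ñ := fderiv ℝ (fun ỹ => G̃(φ(x), ỹ)) (Dφ(x) y) satisfy the nonlinear-connection cocycle: Ñ ∘ Dφ(x) = (fun w => −D²φ(x)(y)(w)) + Dφ(x) ∘ N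 as maps E → E. (The coherence (4.5) in Proposition 4.1: the vertical derivative of a spray transforms as a nonlinear connection.) -/
/-!
With `x` fixed, the cocycle is an identity between two functions of the fibre variable `y` on the
open slice of `Ω` over `x`; differentiating it there gives the claim. On the left the chain rule
(inner map the continuous linear `Dφ(x)`) produces `Ñ ∘ Dφ(x)`. On the right the quadratic term
has derivative `-(1/2) (D²φ(x)(y)(w) + D²φ(x)(w)(y))`, which collapses to `-D²φ(x)(y)(w)` by the
symmetry of the second derivative of a C² map (`ContDiffAt.isSymmSndFDerivAt`).
-/

/-- **Proposition 4.1, coherence (4.5)**: if spray coefficients `G` and `G'` in two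
overlapping charts (related by the C² transition map `φ`, with `Dφ(x) = fderiv ℝ φ x` and
`D²φ(x) = fderiv ℝ (fderiv ℝ φ) x`) satisfy the spray transformation cocycle
`G'(φ(x), Dφ(x)y) = −(1/2)·D²φ(x)(y)(y) + Dφ(x)(G(x,y))`, then their fiber derivatives
satisfy the nonlinear-connection cocycle
`Ñ ∘ Dφ(x) = (w ↦ −D²φ(x)(y)(w)) + Dφ(x) ∘ N`: the vertical derivative of a spray
transforms as a nonlinear connection. -/
theorem stmt_16
    {E : Type*} [NormedAddCommGroup E] [NormedSpace ℝ E]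
    (U : Set E) (hU_open : IsOpen U) (φ : E → E) (hφ : ContDiffOn ℝ 2 φ U)
    (Ω : Set (E × E)) (hΩ_open : IsOpen Ω) (hΩU : ∀ p ∈ Ω, p.1 ∈ U)
    (V' : Set (E × E))
    (G : E × E → E) (G' : E × E → E)
    (hG_diff : ∀ p ∈ Ω, DifferentiableAt ℝ (fun y => G (p.1, y)) p.2)
    (hG'_diff : ∀ p ∈ V', DifferentiableAt ℝ (fun y => G' (p.1, y)) p.2)
    (hmem : ∀ p ∈ Ω, (φ p.1, fderiv ℝ φ p.1 p.2) ∈ V')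
    (hcoc : ∀ p ∈ Ω,
      G' (φ p.1, fderiv ℝ φ p.1 p.2) =
        -((1 / 2 : ℝ) • (fderiv ℝ (fderiv ℝ φ) p.1 p.2) p.2) +
          fderiv ℝ φ p.1 (G p)) :
    ∀ p ∈ Ω, ∀ w : E,
      fderiv ℝ (fun y => G' (φ p.1, y)) (fderiv ℝ φ p.1 p.2) (fderiv ℝ φ p.1 w) =
        -((fderiv ℝ (fderiv ℝ φ) p.1 p.2) w) +
          fderiv ℝ φ p.1 (fderiv ℝ (fun y => G (p.1, y)) p.2 w) := by
  rintro ⟨x, y⟩ hp w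
  have hsymm : IsSymmSndFDerivAt ℝ φ x :=
    (hφ.contDiffAt (hU_open.mem_nhds (hΩU _ hp))).isSymmSndFDerivAt (by simp)
  have hleft : HasFDerivAt (fun v => G' (φ x, fderiv ℝ φ x v))
      ((fderiv ℝ (fun v => G' (φ x, v)) (fderiv ℝ φ x y)).comp (fderiv ℝ φ x)) y :=
    (hG'_diff _ (hmem _ hp)).hasFDerivAt.comp y (fderiv ℝ φ x).hasFDerivAt
  have hquad := (((fderiv ℝ (fderiv ℝ φ) x).hasFDerivAt (x := y)).clm_apply
    (hasFDerivAt_id y)).const_smul (1 / 2 : ℝ)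
  have hright := hquad.neg.add
    ((fderiv ℝ φ x).hasFDerivAt.comp y (hG_diff _ hp).hasFDerivAt)
  have hslice : ∀ᶠ v in nhds y, (x, v) ∈ Ω :=
    (Continuous.prodMk_right x).continuousAt.eventually_mem (hΩ_open.mem_nhds hp)
  have huniq := hleft.unique
    (hright.congr_of_eventuallyEq (hslice.mono fun v hv => hcoc (x, v) hv))
  have hw := congrArg (fun L : E →L[ℝ] E => L w) huniq
  have hs : fderiv ℝ (fderiv ℝ φ) x w y = fderiv ℝ (fderiv ℝ φ) x y w := hsymm w y
  simp only [ContinuousLinearMap.comp_apply, ContinuousLinearMap.add_apply,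
    ContinuousLinearMap.neg_apply, ContinuousLinearMap.smul_apply,
    ContinuousLinearMap.flip_apply, ContinuousLinearMap.id_apply, id, hs] at hw
  rw [hw]
  congr 2
  module
end

section
/- Let U ⊆ E be open and φ : U → E of class C²; write Dφ(x) := fderiv ℝ φ x and D²φ(x) := fderiv ℝ (fun x => fderiv ℝ φ x) x. Let Ω ⊆ U × E be open, Ṽ ⊆ E × E, and let N : Ω → (E →L[ℝ] E) and Ñ : Ṽ → (E →L[ℝ] E) be such that for every x the partial maps y ↦ N(x,y) and ỹ ↦ Ñ(x̃,ỹ) are differentiable on their domains. Assume (φ(x), Dφ(x) y) ∈ Ṽ for all (x,y) ∈ Ω and that the nonlinear-connection cocycle holds: Ñ(φ(x), Dφ(x) y) ∘ Dφ(x) = (fun u => −D²φ(x)(y)(u)) + Dφ(x) ∘ N(x,y) for all (x,y) ∈ Ω. Then for every (x,y) ∈ Ω and all w, u ∈ E, the fiber derivatives satisfy the Christoffel cocycle: ((fderiv ℝ (fun ỹ => Ñ(φ(x), ỹ)) (Dφ(x) y)) (Dφ(x) w)) (Dφ(x) u) = −D²φ(x)(w)(u) + Dφ(x)(((fderiv ℝ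 (fun y' => N(x,y')) y) w)(u)). (The coherence (4.6) in Proposition 4.1: the vertical derivative of a nonlinear connection transforms as an anisotropic connection, i.e. with the Christoffel cocycle.) -/
/-!
With the base point `x` and the vector `u` fixed, the cocycle is an identity between two `E`-valued
functions of `y`, valid near each `y` with `(x, y) ∈ Ω` because `Ω` is open. Differentiating it in
the direction `w` gives the claim: the chain rule through the continuous linear map `Dφ(x)` handles
the left side, and the Hessian term is linear in `y`, so it is its own derivative.
-/

/-- **Proposition 4.1, coherence (4.6), second part**: if nonlinear-connection coefficients
`N` and `N'` in two overlapping charts (related by the C² transition map `φ`, with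
`Dφ(x) = fderiv ℝ φ x` and `D²φ(x) = fderiv ℝ (fderiv ℝ φ) x`) satisfy the
nonlinear-connection cocycle
`N'(φ(x), Dφ(x)y) ∘ Dφ(x) = (u ↦ −D²φ(x)(y)(u)) + Dφ(x) ∘ N(x,y)`, then their fiber
derivatives satisfy the Christoffel cocycle: the vertical derivative of a nonlinear
connection transforms as an anisotropic connection. -/
theorem stmt_17
    {E : Type*} [NormedAddCommGroup E] [NormedSpace ℝ E]
    (U : Set E) (hU_open : IsOpen U) (φ : E → E) (hφ : ContDiffOn ℝ 2 φ U)
    (Ω : Set (E × E)) (hΩ_open : IsOpen Ω) (hΩU : ∀ p ∈ Ω, p.1 ∈ U)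
    (V' : Set (E × E))
    (N : E × E → (E →L[ℝ] E)) (N' : E × E → (E →L[ℝ] E))
    (hN_diff : ∀ p ∈ Ω, DifferentiableAt ℝ (fun y => N (p.1, y)) p.2)
    (hN'_diff : ∀ p ∈ V', DifferentiableAt ℝ (fun y => N' (p.1, y)) p.2)
    (hmem : ∀ p ∈ Ω, (φ p.1, fderiv ℝ φ p.1 p.2) ∈ V')
    (hcoc : ∀ p ∈ Ω, ∀ u : E,
      N' (φ p.1, fderiv ℝ φ p.1 p.2) (fderiv ℝ φ p.1 u) =
        -((fderiv ℝ (fderiv ℝ φ) p.1 p.2) u) + fderiv ℝ φ p.1 (N p u)) :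
    ∀ p ∈ Ω, ∀ w u : E,
      (fderiv ℝ (fun y => N' (φ p.1, y)) (fderiv ℝ φ p.1 p.2) (fderiv ℝ φ p.1 w))
          (fderiv ℝ φ p.1 u) =
        -((fderiv ℝ (fderiv ℝ φ) p.1 w) u) +
          fderiv ℝ φ p.1 ((fderiv ℝ (fun y => N (p.1, y)) p.2 w) u) := by
  rintro ⟨x, y⟩ hp w u
  have hL : HasFDerivAt (fun z => N' (φ x, fderiv ℝ φ x z))
      ((fderiv ℝ (fun z => N' (φ x, z)) (fderiv ℝ φ x y)).comp (fderiv ℝ φ x)) y :=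
    HasFDerivAt.comp (g := fun z => N' (φ x, z)) y
      (hN'_diff _ (hmem _ hp)).hasFDerivAt (fderiv ℝ φ x).hasFDerivAt
  have hLu := hL.clm_apply (hasFDerivAt_const (fderiv ℝ φ x u) y)
  have hH := (fderiv ℝ (fderiv ℝ φ) x).hasFDerivAt (x := y) |>.clm_apply (hasFDerivAt_const u y)
  have hNu := (hN_diff _ hp).hasFDerivAt.clm_apply (hasFDerivAt_const u y)
  have hR := hH.neg.add ((fderiv ℝ φ x).hasFDerivAt.comp y hNu)
  have hnear : ∀ᶠ z in nhds y, (x, z) ∈ Ω :=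
    (Continuous.prodMk_right x).continuousAt.eventually (hΩ_open.mem_nhds hp)
  have hLR := hR.congr_of_eventuallyEq (hnear.mono fun z hz => hcoc (x, z) hz u)
  simpa using DFunLike.congr_fun (hLu.unique hLR) w
end
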